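/- There exists a* ∈ [1, 1.032695) such that λ₁(a*) ≤ λ₁(a) for all a ≥ 1 (i.e. the first Dirichlet biharmonic eigenvalue attains a global minimum over rectangles of unit area), and every such minimiser a* satisfies (a*)² ≤ 1.066459, i.e. the quotient between the longest and shortest side lengths of a minimising rectangle does not exceed 1.066459. -/

import Mathlib

open MeasureTheory Real Filter

noncomputable section

/-- Directional (partial) derivative of `u : ℝ × ℝ → ℝ` in direction `v`. -/
def pd (v : ℝ × ℝ) (u : ℝ × ℝ → ℝ) : ℝ × ℝ → ℝ := fun p => fderiv ℝ u p v

/-- Second partial derivative `∂²u/∂x²`. -/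
def uxx (u : ℝ × ℝ → ℝ) : ℝ × ℝ → ℝ := pd (1, 0) (pd (1, 0) u)

/-- Second partial derivative `∂²u/∂y²`. -/
def uyy (u : ℝ × ℝ → ℝ) : ℝ × ℝ → ℝ := pd (0, 1) (pd (0, 1) u)

/-- Mixed second partial derivative `∂²u/∂x∂y`. -/
def uxy (u : ℝ × ℝ → ℝ) : ℝ × ℝ → ℝ := pd (0, 1) (pd (1, 0) u)

/-- The Laplacian `Δu = u_xx + u_yy`. -/
def lap (u : ℝ × ℝ → ℝ) : ℝ × ℝ → ℝ := fun p => uxx u p + uyy u p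

/-- The open rectangle `R_a = (0,a) × (0,1/a)` of unit area. -/
def Rect (a : ℝ) : Set (ℝ × ℝ) := Set.Ioo 0 a ×ˢ Set.Ioo 0 (1 / a)

/-- Admissible test functions: smooth, compactly supported inside `Ω`. -/
def Adm (Ω : Set (ℝ × ℝ)) (u : ℝ × ℝ → ℝ) : Prop :=
  ContDiff ℝ (⊤ : ℕ∞) u ∧ HasCompactSupport u ∧ tsupport u ⊆ Ω

/-- First Dirichlet eigenvalue of the biharmonic operator on `R_a`,
characterized variationally as the infimum of the Rayleigh quotient. -/
def lam1 (a : ℝ) : ℝ :=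
  sInf { μ | ∃ u : ℝ × ℝ → ℝ, Adm (Rect a) u ∧ u ≠ 0 ∧
    μ = (∫ p, (lap u p) ^ 2) / (∫ p, (u p) ^ 2) }

theorem Adm.pd {Ω : Set (ℝ × ℝ)} {u : ℝ × ℝ → ℝ} (h : Adm Ω u) (v : ℝ × ℝ) :
    Adm Ω (pd v u) := by
  refine ⟨(h.1.fderiv_right (m := ((⊤ : ℕ∞) : WithTop ℕ∞)) (by simp)).clm_apply contDiff_const,
    h.2.1.fderiv_apply ℝ v, (tsupport_fderiv_apply_subset ℝ v).trans h.2.2⟩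

theorem Adm.differentiable {Ω : Set (ℝ × ℝ)} {u : ℝ × ℝ → ℝ} (h : Adm Ω u) :
    Differentiable ℝ u := h.1.differentiable (by simp)

theorem Adm.continuous {Ω : Set (ℝ × ℝ)} {u : ℝ × ℝ → ℝ} (h : Adm Ω u) :
    Continuous u := h.1.continuous

theorem Adm.integrable_mul {Ω : Set (ℝ × ℝ)} {u : ℝ × ℝ → ℝ} (h : Adm Ω u)
    {g : ℝ × ℝ → ℝ} (hg : Continuous g) : Integrable (fun p => u p * g p) :=
  (h.continuous.mul hg).integrable_of_hasCompactSupport h.2.1.mul_right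

theorem Adm.integrable_sq {Ω : Set (ℝ × ℝ)} {u : ℝ × ℝ → ℝ} (h : Adm Ω u) :
    Integrable (fun p => u p ^ 2) := by
  simpa only [pow_two] using h.integrable_mul h.continuous

theorem Adm.pd_comm {Ω : Set (ℝ × ℝ)} {u : ℝ × ℝ → ℝ} (h : Adm Ω u) (v w : ℝ × ℝ) :
    _root_.pd v (_root_.pd w u) = _root_.pd w (_root_.pd v u) := by
  have key : ∀ v w p, _root_.pd v (_root_.pd w u) p = fderiv ℝ (fderiv ℝ u) p v w := by
    intro v w p
    have hd : DifferentiableAt ℝ (fderiv ℝ u) p :=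
      ((h.1.fderiv_right (m := ((⊤ : ℕ∞) : WithTop ℕ∞)) (by simp)).differentiable (by simp)) p
    have := (hd.hasFDerivAt.clm_apply (hasFDerivAt_const w p)).fderiv
    show fderiv ℝ (fun q => fderiv ℝ u q w) p v = _
    rw [this]
    simp
  funext p
  rw [key, key]
  have hs : IsSymmSndFDerivAt ℝ u p := (h.1.contDiffAt).isSymmSndFDerivAt (by
    simpa using WithTop.coe_le_coe.2 (le_top : (2 : ℕ∞) ≤ ⊤))
  exact hs v w

theorem Adm.integral_pd_mul {Ω : Set (ℝ × ℝ)} {f g : ℝ × ℝ → ℝ} (hf : Adm Ω f) (hg : Adm Ω g)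
    (v : ℝ × ℝ) : ∫ p, _root_.pd v f p * g p = -∫ p, f p * _root_.pd v g p := by
  have := integral_mul_fderiv_eq_neg_fderiv_mul_of_integrable (μ := (volume : Measure (ℝ × ℝ)))
    (f := f) (g := g) (v := v) ((hf.pd v).integrable_mul hg.continuous)
    (hf.integrable_mul (hg.pd v).continuous) (hf.integrable_mul hg.continuous)
    (fun x _ => hf.differentiable x) (fun x _ => hg.differentiable x)
  simp only [_root_.pd]
  linarith

/-- The energy on the unit square obtained from `∫ (Δu)²` on a rectangle by rescaling, where `t` is
the fourth power of the side length. -/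
def energy (t : ℝ) (u : ℝ × ℝ → ℝ) : ℝ :=
  t⁻¹ * (∫ p, uxx u p ^ 2) + 2 * (∫ p, uxy u p ^ 2) + t * (∫ p, uyy u p ^ 2)

theorem Adm.integral_lap_sq {Ω : Set (ℝ × ℝ)} {u : ℝ × ℝ → ℝ} (h : Adm Ω u) :
    ∫ p, lap u p ^ 2 = energy 1 u := by
  have hx := h.pd (1, 0)
  have hy := h.pd (0, 1)
  have hxx := hx.pd (1, 0)
  have hyy := hy.pd (0, 1)
  have hxy := hx.pd (0, 1)
  have e1 : ∫ p, uxx u p * uyy u p = ∫ p, uxy u p ^ 2 := by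
    unfold uxx uyy uxy
    rw [hx.integral_pd_mul hyy, hy.pd_comm, ← h.pd_comm (0, 1) (1, 0)]
    have := hxy.integral_pd_mul hx (0, 1)
    simp only [mul_comm (_root_.pd (1, 0) u _)]
    rw [this, neg_neg]
    simp only [pow_two]
  have i1 : Integrable (fun p => uxx u p ^ 2) := hxx.integrable_sq
  have i2 : Integrable (fun p => uyy u p ^ 2) := hyy.integrable_sq
  have i3 : Integrable (fun p => uxx u p * uyy u p) := hxx.integrable_mul hyy.continuous
  have e2 : (fun p => lap u p ^ 2)
      = fun p => uxx u p ^ 2 + 2 * (uxx u p * uyy u p) + uyy u p ^ 2 := by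
    funext p; simp only [lap]; ring
  have i4 : Integrable (fun p => uxx u p ^ 2 + 2 * (uxx u p * uyy u p)) := i1.add (i3.const_mul 2)
  rw [e2, integral_add i4 i2, integral_add i1 (i3.const_mul 2),
    integral_const_mul, e1, energy]
  ring

/-- The area-preserving dilation `(x, y) ↦ (s x, y / s)`. -/
def squeeze (s : ℝ) (p : ℝ × ℝ) : ℝ × ℝ := (s * p.1, s⁻¹ * p.2)

theorem squeeze_squeeze_inv {s : ℝ} (hs : s ≠ 0) (p : ℝ × ℝ) : squeeze s (squeeze s⁻¹ p) = p := by
  ext <;> simp [squeeze, hs]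

/-- `squeeze s` as a homeomorphism. -/
def squeezeHomeomorph (s : ℝ) (hs : s ≠ 0) : (ℝ × ℝ) ≃ₜ (ℝ × ℝ) :=
  (Homeomorph.mulLeft₀ s hs).prodCongr (Homeomorph.mulLeft₀ s⁻¹ (inv_ne_zero hs))

theorem coe_squeezeHomeomorph (s : ℝ) (hs : s ≠ 0) : ⇑(squeezeHomeomorph s hs) = squeeze s := rfl

theorem integral_comp_squeeze {s : ℝ} (hs : 0 < s) (f : ℝ × ℝ → ℝ) :
    ∫ p, f (squeeze s p) = ∫ p, f p := by
  have hm : Measure.map (squeeze s) (volume : Measure (ℝ × ℝ)) = volume := by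
    have h1 := Measure.map_prod_map (volume : Measure ℝ) (volume : Measure ℝ)
      (measurable_const_mul s) (measurable_const_mul s⁻¹)
    have hsi : (0 : ℝ) < s⁻¹ := inv_pos.mpr hs
    rw [Real.map_volume_mul_left hs.ne', Real.map_volume_mul_left hsi.ne',
      Measure.prod_smul_left, Measure.prod_smul_right, smul_smul,
      ← ENNReal.ofReal_mul (abs_nonneg _), ← abs_mul] at h1
    rw [inv_inv, inv_mul_cancel₀ hs.ne', abs_one, ENNReal.ofReal_one, one_smul] at h1
    exact h1.symm
  conv_rhs => rw [← hm]
  rw [← coe_squeezeHomeomorph s hs.ne',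
    (squeezeHomeomorph s hs.ne').measurableEmbedding.integral_map]

theorem pd_const_mul_comp_squeeze {u : ℝ × ℝ → ℝ} (hu : Differentiable ℝ u) (s c : ℝ) :
    pd (1, 0) (fun p => c * u (squeeze s p)) = (fun p => (c * s) * pd (1, 0) u (squeeze s p)) ∧
    pd (0, 1) (fun p => c * u (squeeze s p)) =
      (fun p => (c * s⁻¹) * pd (0, 1) u (squeeze s p)) := by
  let S : ℝ × ℝ →L[ℝ] ℝ × ℝ :=
    (s • ContinuousLinearMap.fst ℝ ℝ ℝ).prod (s⁻¹ • ContinuousLinearMap.snd ℝ ℝ ℝ)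
  have key : ∀ p v, fderiv ℝ (fun p => c * u (squeeze s p)) p v =
      c * fderiv ℝ u (squeeze s p) (S v) := by
    intro p v
    have h1 : HasFDerivAt (squeeze s) S p := S.hasFDerivAt
    have h2 := (((hu (squeeze s p)).hasFDerivAt.comp p h1).const_mul c).fderiv
    have h3 : fderiv ℝ (fun p => c * u (squeeze s p)) p
        = c • ((fderiv ℝ u (squeeze s p)).comp S) := h2
    rw [h3]
    simp
  constructor
  · funext p
    have : S (1, 0) = s • ((1, 0) : ℝ × ℝ) := by ext <;> simp [S]
    simp only [pd, key, this, map_smul, smul_eq_mul]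
    ring
  · funext p
    have : S (0, 1) = s⁻¹ • ((0, 1) : ℝ × ℝ) := by ext <;> simp [S]
    simp only [pd, key, this, map_smul, smul_eq_mul]
    ring

theorem Adm.comp_squeeze {b s : ℝ} (hs : 0 < s) {u : ℝ × ℝ → ℝ}
    (h : Adm (Rect b) u) : Adm (Rect (b / s)) (fun p => u (squeeze s p)) := by
  have ht : tsupport (fun p => u (squeeze s p)) = squeeze s ⁻¹' tsupport u := by
    have := tsupport_comp_eq_preimage u (squeezeHomeomorph s hs.ne')
    exact this
  refine ⟨h.1.comp (by unfold squeeze; fun_prop),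
    h.2.1.comp_homeomorph (squeezeHomeomorph s hs.ne'), ?_⟩
  rw [ht]
  intro p hp
  have := h.2.2 hp
  simp only [Rect, squeeze, Set.mem_prod, Set.mem_Ioo] at this ⊢
  obtain ⟨⟨h1, h2⟩, h3, h4⟩ := this
  have hsi : (0 : ℝ) < s⁻¹ := inv_pos.mpr hs
  refine ⟨⟨pos_of_mul_pos_right h1 hs.le, ?_⟩, pos_of_mul_pos_right h3 hsi.le, ?_⟩
  · rw [lt_div_iff₀ hs]; linarith
  · rw [inv_mul_lt_iff₀ hs] at h4
    rw [one_div, inv_div, div_eq_mul_one_div]; exact h4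

theorem energy_comp_squeeze {Ω : Set (ℝ × ℝ)} {u : ℝ × ℝ → ℝ} (h : Adm Ω u) {s : ℝ} (hs : 0 < s)
    (t : ℝ) : energy t (fun p => u (squeeze s p)) = energy (t / s ^ 4) u := by
  have e := pd_const_mul_comp_squeeze h.differentiable s 1
  have ex := pd_const_mul_comp_squeeze (h.pd (1, 0)).differentiable s (1 * s)
  have ey := pd_const_mul_comp_squeeze (h.pd (0, 1)).differentiable s (1 * s⁻¹)
  simp only [one_mul] at e ex ey
  unfold energy uxx uxy uyy
  rw [e.1, e.2, ex.1, ex.2, ey.2]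
  simp only [mul_pow, integral_const_mul]
  rw [integral_comp_squeeze hs (fun p => pd (1, 0) (pd (1, 0) u) p ^ 2),
    integral_comp_squeeze hs (fun p => pd (0, 1) (pd (1, 0) u) p ^ 2),
    integral_comp_squeeze hs (fun p => pd (0, 1) (pd (0, 1) u) p ^ 2)]
  field_simp

/-- After rescaling to the unit square, only the energy depends on the side length. -/
theorem lam1_eq {a : ℝ} (ha : 0 < a) : lam1 a =
    sInf {μ | ∃ v, Adm (Rect 1) v ∧ v ≠ 0 ∧ μ = energy (a ^ 4) v / ∫ p, v p ^ 2} := by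
  unfold lam1
  congr 1
  have hai : 0 < a⁻¹ := inv_pos.mpr ha
  have hne : ∀ (s : ℝ) (u : ℝ × ℝ → ℝ), 0 < s → u ≠ 0 → (fun p => u (squeeze s p)) ≠ 0 := by
    intro s u hs hu hc
    apply hu
    funext p
    have := congrFun hc (squeeze s⁻¹ p)
    simpa [squeeze_squeeze_inv hs.ne'] using this
  ext μ
  constructor
  · rintro ⟨u, hu, hu0, rfl⟩
    refine ⟨fun p => u (squeeze a p), ?_, hne a u ha hu0, ?_⟩
    · have := hu.comp_squeeze ha
      rwa [div_self ha.ne'] at this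
    · rw [hu.integral_lap_sq, energy_comp_squeeze hu ha, div_self (by positivity),
        integral_comp_squeeze ha (fun p => u p ^ 2)]
  · rintro ⟨u, hu, hu0, rfl⟩
    have hv : Adm (Rect a) (fun p => u (squeeze a⁻¹ p)) := by
      have := hu.comp_squeeze hai
      rwa [one_div, inv_inv] at this
    refine ⟨fun p => u (squeeze a⁻¹ p), hv, hne _ u hai hu0, ?_⟩
    rw [hv.integral_lap_sq, energy_comp_squeeze hu hai,
      integral_comp_squeeze hai (fun p => u p ^ 2)]
    congr 2
    field_simp

theorem integral_eq_of_vanish {f : ℝ → ℝ} {α β : ℝ} (hαβ : α ≤ β)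
    (h0 : ∀ x, x ∉ Set.Ioo α β → f x = 0) : ∫ x, f x = ∫ x in α..β, f x := by
  rw [intervalIntegral.integral_of_le hαβ]
  refine (setIntegral_eq_integral_of_forall_compl_eq_zero fun x hx => h0 x fun h => hx ?_).symm
  exact Set.Ioo_subset_Ioc_self h

theorem integrable_of_vanish {f : ℝ → ℝ} {α β : ℝ} (hf : Continuous f)
    (h0 : ∀ x, x ∉ Set.Ioo α β → f x = 0) : Integrable f :=
  hf.integrable_of_hasCompactSupport <| HasCompactSupport.intro (isCompact_Icc (a := α) (b := β))
    fun x hx => h0 x fun h => hx (Set.Ioo_subset_Icc_self h)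

/-- A continuous function dominating the derivative of a function that vanishes at both ends has
nonnegative integral. -/
theorem integral_nonneg_of_deriv_le {f V V' : ℝ → ℝ} {α β : ℝ} (hαβ : α ≤ β) (hf : Continuous f)
    (h0 : ∀ x, x ∉ Set.Ioo α β → f x = 0)
    (hV : ∀ x ∈ Set.Icc α β, HasDerivAt V (V' x) x) (hle : ∀ x ∈ Set.Icc α β, V' x ≤ f x)
    (hα : V α = 0) (hβ : V β = 0) : 0 ≤ ∫ x, f x := by
  rw [integral_eq_of_vanish hαβ h0]
  have := intervalIntegral.sub_le_integral_of_hasDeriv_right_of_le hαβ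
    (fun x hx => (hV x hx).continuousAt.continuousWithinAt)
    (fun x hx => (hV x (Set.Ioo_subset_Icc_self hx)).hasDerivWithinAt)
    (φ := f) (hf.continuousOn.integrableOn_Icc)
    (fun x hx => hle x (Set.Ioo_subset_Icc_self hx))
  linarith

theorem integral_eq_zero_of_hasDerivAt {f V : ℝ → ℝ} {α β : ℝ} (hαβ : α ≤ β) (hf : Continuous f)
    (h0 : ∀ x, x ∉ Set.Ioo α β → f x = 0)
    (hV : ∀ x ∈ Set.Icc α β, HasDerivAt V (f x) x)
    (hα : V α = 0) (hβ : V β = 0) : ∫ x, f x = 0 := by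
  rw [integral_eq_of_vanish hαβ h0, intervalIntegral.integral_eq_sub_of_hasDerivAt
    (fun x hx => hV x (by rwa [Set.uIcc_of_le hαβ] at hx)) (hf.intervalIntegrable _ _), hα, hβ,
    sub_zero]

/-- The function `π cot (π x)`, made continuous by freezing it outside `[δ, 1 - δ]`. -/
def frozenCot (δ x : ℝ) : ℝ :=
  π * cos (π * max δ (min x (1 - δ))) / sin (π * max δ (min x (1 - δ)))

theorem sin_pi_mul_pos {x : ℝ} (h0 : 0 < x) (h1 : x < 1) : 0 < sin (π * x) :=
  sin_pos_of_pos_of_lt_pi (by positivity) (by nlinarith [pi_pos])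

theorem continuous_frozenCot {δ : ℝ} (hδ : 0 < δ) (hδ' : δ < 1 / 2) :
    Continuous (frozenCot δ) := by
  unfold frozenCot
  refine Continuous.div (by fun_prop) (by fun_prop) fun x => (sin_pi_mul_pos ?_ ?_).ne'
  · exact lt_of_lt_of_le hδ (le_max_left _ _)
  · exact max_lt (by linarith) (lt_of_le_of_lt (min_le_right _ _) (by linarith))

theorem frozenCot_eq {δ x : ℝ} (hx : x ∈ Set.Icc δ (1 - δ)) :
    frozenCot δ x = π * cos (π * x) / sin (π * x) := by
  rw [frozenCot, min_eq_left hx.2, max_eq_right hx.1]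

theorem integral_sq_sub_frozenCot {δ : ℝ} (hδ : 0 < δ) (hδ' : δ < 1 / 2) {w w₁ : ℝ → ℝ}
    (hw : ∀ x, HasDerivAt w (w₁ x) x) (hc : Continuous w₁)
    (h0 : ∀ x, x ∉ Set.Ioo δ (1 - δ) → w x = 0 ∧ w₁ x = 0) :
    ∫ x, (w₁ x ^ 2 - π ^ 2 * w x ^ 2 - (w₁ x - frozenCot δ x * w x) ^ 2) = 0 := by
  have hwc : Continuous w := continuous_iff_continuousAt.2 fun x => (hw x).continuousAt
  have hk := continuous_frozenCot hδ hδ'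
  refine integral_eq_zero_of_hasDerivAt (α := δ) (β := 1 - δ)
    (V := fun x => π * cos (π * x) / sin (π * x) * w x ^ 2) (by linarith) (by fun_prop) ?_ ?_ ?_ ?_
  · intro x hx
    simp [h0 x hx]
  · intro x hx
    have hs : sin (π * x) ≠ 0 :=
      (sin_pi_mul_pos (hδ.trans_le hx.1) (by linarith [hx.2])).ne'
    have hl : HasDerivAt (fun x : ℝ => π * x) π x := by
      simpa using (hasDerivAt_id x).const_mul π
    have hd := ((hl.cos.const_mul π).div hl.sin hs).mul ((hw x).pow 2)
    refine hd.congr_deriv ?_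
    rw [frozenCot_eq hx]
    simp only [Pi.pow_apply, Pi.div_apply, Nat.cast_ofNat, Nat.add_one_sub_one, pow_one]
    field_simp
    ring
  · simp [h0 δ (by simp)]
  · simp [h0 (1 - δ) (by simp)]

theorem wirtinger {δ : ℝ} (hδ : 0 < δ) (hδ' : δ < 1 / 2) {w w₁ : ℝ → ℝ}
    (hw : ∀ x, HasDerivAt w (w₁ x) x) (hc : Continuous w₁)
    (h0 : ∀ x, x ∉ Set.Ioo δ (1 - δ) → w x = 0 ∧ w₁ x = 0) :
    0 ≤ ∫ x, (w₁ x ^ 2 - π ^ 2 * w x ^ 2) := by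
  have hwc : Continuous w := continuous_iff_continuousAt.2 fun x => (hw x).continuousAt
  have hk := continuous_frozenCot hδ hδ'
  have h := integral_sq_sub_frozenCot hδ hδ' hw hc h0
  rw [integral_sub (integrable_of_vanish (α := δ) (β := 1 - δ) (by fun_prop) _)
    (integrable_of_vanish (α := δ) (β := 1 - δ) (by fun_prop) _)] at h
  · have : 0 ≤ ∫ x, (w₁ x - frozenCot δ x * w x) ^ 2 := integral_nonneg fun x => sq_nonneg _
    linarith
  all_goals
    intro x hx
    simp [h0 x hx]

/-- A positive supersolution `φ` of `c φ'''' - τ φ'' = L φ` bounds `c ∫ w''² + τ ∫ w'²` below. -/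
theorem le_of_supersolution {δ : ℝ} (hδ : 0 < δ) (hδ' : δ < 1 / 2) {w w₁ w₂ : ℝ → ℝ}
    (hw : ∀ x, HasDerivAt w (w₁ x) x) (hw₁ : ∀ x, HasDerivAt w₁ (w₂ x) x) (hc : Continuous w₂)
    (h0 : ∀ x, x ∉ Set.Ioo δ (1 - δ) → w x = 0 ∧ w₁ x = 0 ∧ w₂ x = 0)
    {c τ l : ℝ} (hc0 : 0 ≤ c) {φ φ₁ φ₂ φ₃ φ₄ : ℝ → ℝ}
    (hφ : ∀ x, HasDerivAt φ (φ₁ x) x) (hφ₁ : ∀ x, HasDerivAt φ₁ (φ₂ x) x)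
    (hφ₂ : ∀ x, HasDerivAt φ₂ (φ₃ x) x) (hφ₃ : ∀ x, HasDerivAt φ₃ (φ₄ x) x)
    (hpos : ∀ x ∈ Set.Ioo (0 : ℝ) 1, 0 < φ x)
    (hsup : ∀ x ∈ Set.Ioo (0 : ℝ) 1, l * φ x ≤ c * φ₄ x - τ * φ₂ x)
    (hS : ∀ x ∈ Set.Ioo (0 : ℝ) 1,
      0 ≤ c * (2 * φ₁ x ^ 2 - 4 * (φ x * φ₂ x)) + τ * φ x ^ 2) :
    0 ≤ ∫ x, (c * w₂ x ^ 2 + τ * w₁ x ^ 2 - l * w x ^ 2) := by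
  have hwc : Continuous w := continuous_iff_continuousAt.2 fun x => (hw x).continuousAt
  have hwc₁ : Continuous w₁ := continuous_iff_continuousAt.2 fun x => (hw₁ x).continuousAt
  let z : ℝ → ℝ := fun x => w x / φ x
  let z₁ : ℝ → ℝ := fun x => (w₁ x * φ x - w x * φ₁ x) / φ x ^ 2
  let z₂ : ℝ → ℝ := fun x => ((w₂ x * φ x - w x * φ₂ x) * φ x ^ 2
    - (w₁ x * φ x - w x * φ₁ x) * (2 * φ x * φ₁ x)) / (φ x ^ 2) ^ 2
  have hin : ∀ x ∈ Set.Icc δ (1 - δ), x ∈ Set.Ioo (0 : ℝ) 1 := fun x hx =>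
    ⟨hδ.trans_le hx.1, by linarith [hx.2]⟩
  refine integral_nonneg_of_deriv_le (α := δ) (β := 1 - δ)
    (V := fun x => c * (2 * (φ x * φ₁ x * z₁ x ^ 2) + 2 * (φ x * φ₂ x * (z x * z₁ x))
      + z x ^ 2 * (φ₁ x * φ₂ x - φ x * φ₃ x)) + τ * (φ x * φ₁ x * z x ^ 2))
    (V' := fun x => c * w₂ x ^ 2 + τ * w₁ x ^ 2 - l * w x ^ 2 -
      (c * φ x ^ 2 * z₂ x ^ 2 +
        (c * (2 * φ₁ x ^ 2 - 4 * (φ x * φ₂ x)) + τ * φ x ^ 2) * z₁ x ^ 2 +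
        (c * φ₄ x - τ * φ₂ x - l * φ x) * φ x * z x ^ 2))
    (by linarith) (by fun_prop) ?_ ?_ ?_ ?_ ?_
  · intro x hx
    simp [h0 x hx]
  · intro x hx
    have hp : φ x ≠ 0 := (hpos x (hin x hx)).ne'
    have hz : HasDerivAt z (z₁ x) x := (hw x).div (hφ x) hp
    have hz₁ : HasDerivAt z₁ (z₂ x) x := by
      refine ((((hw₁ x).mul (hφ x)).sub ((hw x).mul (hφ₁ x))).div ((hφ x).pow 2)
        (pow_ne_zero 2 hp)).congr_deriv ?_
      simp only [Pi.pow_apply, Pi.mul_apply, Pi.sub_apply, z₂]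
      congr 1
      push_cast
      ring
    have e0 : w x = φ x * z x := by simp only [z]; field_simp
    have e1 : w₁ x = φ₁ x * z x + φ x * z₁ x := by
      simp only [z, z₁]; field_simp; ring
    have e2 : w₂ x = φ₂ x * z x + 2 * (φ₁ x * z₁ x) + φ x * z₂ x := by
      simp only [z, z₁, z₂]; field_simp; ring
    have A := (((hφ x).mul (hφ₁ x)).mul (hz₁.pow 2)).const_mul 2
    have B := (((hφ x).mul (hφ₂ x)).mul (hz.mul hz₁)).const_mul 2
    have C := (hz.pow 2).mul (((hφ₁ x).mul (hφ₂ x)).sub ((hφ x).mul (hφ₃ x)))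
    have D := (((hφ x).mul (hφ₁ x)).mul (hz.pow 2)).const_mul τ
    refine ((((A.add B).add C).const_mul c).add D).congr_deriv ?_
    simp only [Pi.pow_apply, Pi.mul_apply, Pi.sub_apply, Nat.cast_ofNat, Nat.add_one_sub_one,
      pow_one]
    rw [e0, e1, e2]
    ring
  · intro x hx
    have h1 := hpos x (hin x hx)
    have h2 := hS x (hin x hx)
    have h3 := hsup x (hin x hx)
    have h4 : 0 ≤ (c * φ₄ x - τ * φ₂ x - l * φ x) * φ x * z x ^ 2 :=
      mul_nonneg (mul_nonneg (by linarith) h1.le) (sq_nonneg _)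
    have h5 := mul_nonneg h2 (sq_nonneg (z₁ x))
    have h6 : 0 ≤ c * φ x ^ 2 * z₂ x ^ 2 := by positivity
    linarith
  · simp [z, z₁, h0 δ (by simp)]
  · simp [z, z₁, h0 (1 - δ) (by simp)]

theorem hasDerivAt_trig_add_hyp (q p C y : ℝ) :
    HasDerivAt (fun y => cos (q * y) + C * cosh (p * y))
      (-q * sin (q * y) + C * p * sinh (p * y)) y ∧
    HasDerivAt (fun y => sin (q * y)) (q * cos (q * y)) y ∧
    HasDerivAt (fun y => cos (q * y)) (-q * sin (q * y)) y ∧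
    HasDerivAt (fun y => sinh (p * y)) (p * cosh (p * y)) y ∧
    HasDerivAt (fun y => cosh (p * y)) (p * sinh (p * y)) y := by
  have hq : HasDerivAt (fun y : ℝ => q * y) q y := by simpa using (hasDerivAt_id y).const_mul q
  have hp : HasDerivAt (fun y : ℝ => p * y) p y := by simpa using (hasDerivAt_id y).const_mul p
  refine ⟨(hq.cos.add (hp.cosh.const_mul C)).congr_deriv (by ring),
    hq.sin.congr_deriv (by ring), hq.cos.congr_deriv (by ring),
    hp.sinh.congr_deriv (by ring), hp.cosh.congr_deriv (by ring)⟩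

/-- Positivity of the even beam mode `cos (q y) + C cosh (p y)` vanishing at `y = 1/2`, and of the
coefficient that appears when it is used as a supersolution. -/
theorem beam_mode_pos {q p c τ C : ℝ} (hq : 0 < q) (hq' : q ≤ 2 * π) (hp : 0 < p)
    (hc : 0 ≤ c) (hτ : 0 ≤ τ) (hpq : c * p ^ 2 = c * q ^ 2 + τ) (hC : 0 ≤ C)
    (hend : cos (q * (1 / 2)) + C * cosh (p * (1 / 2)) = 0)
    (hslope : -q * sin (q * (1 / 2)) + C * p * sinh (p * (1 / 2)) ≤ 0)
    {y : ℝ} (hy : 0 ≤ y) (hy' : y < 1 / 2) :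
    0 < cos (q * y) + C * cosh (p * y) ∧
    0 ≤ c * (2 * (-q * sin (q * y) + C * p * sinh (p * y)) ^ 2 -
      4 * ((cos (q * y) + C * cosh (p * y)) * (-q ^ 2 * cos (q * y) + C * p ^ 2 * cosh (p * y))))
      + τ * (cos (q * y) + C * cosh (p * y)) ^ 2 := by
  set ψ : ℝ → ℝ := fun y => cos (q * y) + C * cosh (p * y) with hψ
  set ψ₁ : ℝ → ℝ := fun y => -q * sin (q * y) + C * p * sinh (p * y) with hψ₁
  set ψ₂ : ℝ → ℝ := fun y => -q ^ 2 * cos (q * y) + C * p ^ 2 * cosh (p * y) with hψ₂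
  set ψ₃ : ℝ → ℝ := fun y => q ^ 3 * sin (q * y) + C * p ^ 3 * sinh (p * y) with hψ₃
  have d0 : ∀ y, HasDerivAt ψ (ψ₁ y) y := fun y => (hasDerivAt_trig_add_hyp q p C y).1
  have d1 : ∀ y, HasDerivAt ψ₁ (ψ₂ y) y := fun y => by
    obtain ⟨-, h1, h2, h3, h4⟩ := hasDerivAt_trig_add_hyp q p C y
    exact ((h1.const_mul (-q)).add (h3.const_mul (C * p))).congr_deriv (by simp only [hψ₂]; ring)
  have d2 : ∀ y, HasDerivAt ψ₂ (ψ₃ y) y := fun y => by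
    obtain ⟨-, h1, h2, h3, h4⟩ := hasDerivAt_trig_add_hyp q p C y
    exact ((h2.const_mul (-q ^ 2)).add (h4.const_mul (C * p ^ 2))).congr_deriv
      (by simp only [hψ₃]; ring)
  have hsin : ∀ y ∈ Set.Ioo (0 : ℝ) (1 / 2), 0 < sin (q * y) := fun y hy =>
    sin_pos_of_pos_of_lt_pi (mul_pos hq hy.1) (by nlinarith [hy.2])
  have hsinh : ∀ y ∈ Set.Ioo (0 : ℝ) (1 / 2), 0 ≤ sinh (p * y) := fun y hy =>
    sinh_nonneg_iff.2 (mul_pos hp hy.1).le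
  have hconv : StrictConvexOn ℝ (Set.Icc (0 : ℝ) (1 / 2)) ψ₁ := by
    refine strictConvexOn_of_deriv2_pos (convex_Icc _ _)
      (fun x _ => (d1 x).continuousAt.continuousWithinAt) fun x hx => ?_
    rw [interior_Icc] at hx
    have e1 : deriv ψ₁ = ψ₂ := funext fun x => (d1 x).deriv
    have e2 : deriv ψ₂ = ψ₃ := funext fun x => (d2 x).deriv
    rw [Function.iterate_succ, Function.iterate_one, Function.comp, e1, e2]
    have := hsin x hx
    have := hsinh x hx
    simp only [hψ₃]
    positivity
  have hneg : ∀ y ∈ Set.Ioo (0 : ℝ) (1 / 2), ψ₁ y < 0 := fun y hy => by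
    have hl : (0 : ℝ) ∈ Set.Icc (0 : ℝ) (1 / 2) := by simp
    have hr : (1 / 2 : ℝ) ∈ Set.Icc (0 : ℝ) (1 / 2) := by simp
    have hy1 : 0 < 1 - 2 * y := by linarith [hy.2]
    have hy2 : 0 < 2 * y := by linarith [hy.1]
    have := hconv.2 hl hr (by norm_num) hy1 hy2 (by ring)
    have e : (1 - 2 * y) • (0 : ℝ) + (2 * y) • (1 / 2 : ℝ) = y := by simp only [smul_eq_mul]; ring
    have e0 : ψ₁ 0 = 0 := by simp [hψ₁]
    have e1 : ψ₁ (1 / 2) ≤ 0 := hslope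
    rw [e, e0] at this
    simp only [smul_eq_mul] at this
    nlinarith [hy.1]
  have hanti : StrictAntiOn ψ (Set.Icc (0 : ℝ) (1 / 2)) := by
    refine strictAntiOn_of_deriv_neg (convex_Icc _ _)
      (fun x _ => (d0 x).continuousAt.continuousWithinAt) fun x hx => ?_
    rw [interior_Icc] at hx
    rw [(d0 x).deriv]
    exact hneg x hx
  have hpos : ∀ y, 0 ≤ y → y < 1 / 2 → 0 < ψ y := fun y hy hy' => by
    have := hanti (a := y) (b := 1 / 2) ⟨hy, hy'.le⟩ (by simp) hy'
    have e : ψ (1 / 2) = 0 := hend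
    linarith
  refine ⟨hpos y hy hy', ?_⟩
  set S : ℝ → ℝ := fun y => c * (2 * ψ₁ y ^ 2 - 4 * (ψ y * ψ₂ y)) + τ * ψ y ^ 2 with hS
  have dS : ∀ y, HasDerivAt S (ψ y * (2 * τ * ψ₁ y - 4 * c * ψ₃ y)) y := fun y => by
    refine (((((d1 y).pow 2).const_mul 2).sub (((d0 y).mul (d2 y)).const_mul 4)).const_mul c
      |>.add (((d0 y).pow 2).const_mul τ)).congr_deriv ?_
    simp only [Nat.cast_ofNat, Nat.add_one_sub_one, pow_one]
    ring
  have hSanti : AntitoneOn S (Set.Icc (0 : ℝ) (1 / 2)) := by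
    refine antitoneOn_of_deriv_nonpos (convex_Icc _ _)
      (fun x _ => (dS x).continuousAt.continuousWithinAt)
      (fun x _ => (dS x).differentiableAt.differentiableWithinAt) fun x hx => ?_
    rw [interior_Icc] at hx
    rw [(dS x).deriv]
    have h1 := hpos x hx.1.le hx.2
    have h2 := hsin x hx
    have h3 := hsinh x hx
    have e : 2 * τ * ψ₁ x - 4 * c * ψ₃ x
        = -((2 * τ * q + 4 * c * q ^ 3) * sin (q * x)
          + C * p * (4 * c * q ^ 2 + 2 * τ) * sinh (p * x)) := by
      simp only [hψ₁, hψ₃]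
      linear_combination (-4 * C * p * sinh (p * x)) * hpq
    rw [e]
    have : 0 ≤ (2 * τ * q + 4 * c * q ^ 3) * sin (q * x)
          + C * p * (4 * c * q ^ 2 + 2 * τ) * sinh (p * x) := by positivity
    nlinarith
  have h1 : S (1 / 2) ≤ S y := hSanti ⟨hy, hy'.le⟩ (by simp) hy'.le
  have h2 : 0 ≤ S (1 / 2) := by
    have e : ψ (1 / 2) = 0 := hend
    simp only [hS, e]
    have : 0 ≤ c * (2 * ψ₁ (1 / 2) ^ 2) := by positivity
    linarith
  exact h2.trans h1

/-- Lower bound for the clamped beam under tension: `c ∫ w''² + τ ∫ w'² ≥ q² (c q² + τ) ∫ w²`. -/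
theorem beam_lower_bound {δ : ℝ} (hδ : 0 < δ) (hδ' : δ < 1 / 2) {w w₁ w₂ : ℝ → ℝ}
    (hw : ∀ x, HasDerivAt w (w₁ x) x) (hw₁ : ∀ x, HasDerivAt w₁ (w₂ x) x) (hc : Continuous w₂)
    (h0 : ∀ x, x ∉ Set.Ioo δ (1 - δ) → w x = 0 ∧ w₁ x = 0 ∧ w₂ x = 0)
    {c τ q p : ℝ} (hc0 : 0 ≤ c) (hτ : 0 ≤ τ) (hq : π ≤ q) (hq' : q ≤ 2 * π) (hp : 0 < p)
    (hpq : c * p ^ 2 = c * q ^ 2 + τ)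
    (hcond : 0 ≤ q * sin (q / 2) * cosh (p / 2) + p * sinh (p / 2) * cos (q / 2)) :
    0 ≤ ∫ x, (c * w₂ x ^ 2 + τ * w₁ x ^ 2 - q ^ 2 * (c * q ^ 2 + τ) * w x ^ 2) := by
  set C : ℝ := -cos (q / 2) / cosh (p / 2) with hCdef
  have hch : 0 < cosh (p / 2) := cosh_pos _
  have hcos : cos (q / 2) ≤ 0 :=
    cos_nonpos_of_pi_div_two_le_of_le (by linarith) (by linarith [pi_pos])
  have hC : 0 ≤ C := div_nonneg (by linarith) hch.le
  have hend : cos (q * (1 / 2)) + C * cosh (p * (1 / 2)) = 0 := by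
    rw [mul_one_div, mul_one_div, hCdef]; field_simp; ring
  have hslope : -q * sin (q * (1 / 2)) + C * p * sinh (p * (1 / 2)) ≤ 0 := by
    have : -q * sin (q * (1 / 2)) + C * p * sinh (p * (1 / 2)) =
        -(q * sin (q / 2) * cosh (p / 2) + p * sinh (p / 2) * cos (q / 2)) / cosh (p / 2) := by
      rw [mul_one_div, mul_one_div, hCdef]; field_simp; ring
    rw [this]
    exact div_nonpos_of_nonpos_of_nonneg (by linarith) hch.le
  have hq0 : 0 < q := pi_pos.trans_le hq
  have key : ∀ y ∈ Set.Ioo (-(1 / 2) : ℝ) (1 / 2), 0 < cos (q * y) + C * cosh (p * y) ∧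
    0 ≤ c * (2 * (-q * sin (q * y) + C * p * sinh (p * y)) ^ 2 -
      4 * ((cos (q * y) + C * cosh (p * y)) * (-q ^ 2 * cos (q * y) + C * p ^ 2 * cosh (p * y))))
      + τ * (cos (q * y) + C * cosh (p * y)) ^ 2 := by
    intro y hy
    rcases le_total 0 y with h | h
    · exact beam_mode_pos hq0 hq' hp hc0 hτ hpq hC hend hslope h hy.2
    · have := beam_mode_pos hq0 hq' hp hc0 hτ hpq hC hend hslope (y := -y) (by linarith)
        (by linarith [hy.1])
      simp only [mul_neg, cos_neg, sin_neg, cosh_neg, sinh_neg] at this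
      refine ⟨this.1, this.2.trans_eq ?_⟩
      ring
  have hs : ∀ x ∈ Set.Ioo (0 : ℝ) 1, x - 1 / 2 ∈ Set.Ioo (-(1 / 2) : ℝ) (1 / 2) := fun x hx =>
    ⟨by linarith [hx.1], by linarith [hx.2]⟩
  have sh : ∀ {f : ℝ → ℝ} {f' x : ℝ}, HasDerivAt f f' (x - 1 / 2) →
      HasDerivAt (fun x => f (x - 1 / 2)) f' x := fun h => h.comp_sub_const _ _
  refine le_of_supersolution hδ hδ' hw hw₁ hc h0 hc0
    (φ := fun x => cos (q * (x - 1 / 2)) + C * cosh (p * (x - 1 / 2)))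
    (φ₁ := fun x => -q * sin (q * (x - 1 / 2)) + C * p * sinh (p * (x - 1 / 2)))
    (φ₂ := fun x => -q ^ 2 * cos (q * (x - 1 / 2)) + C * p ^ 2 * cosh (p * (x - 1 / 2)))
    (φ₃ := fun x => q ^ 3 * sin (q * (x - 1 / 2)) + C * p ^ 3 * sinh (p * (x - 1 / 2)))
    (φ₄ := fun x => q ^ 4 * cos (q * (x - 1 / 2)) + C * p ^ 4 * cosh (p * (x - 1 / 2)))
    ?_ ?_ ?_ ?_ (fun x hx => (key _ (hs x hx)).1) ?_ (fun x hx => (key _ (hs x hx)).2)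
  · intro x
    exact sh (hasDerivAt_trig_add_hyp q p C _).1
  · intro x
    obtain ⟨-, h1, h2, h3, h4⟩ := hasDerivAt_trig_add_hyp q p C (x - 1 / 2)
    exact ((sh h1).const_mul (-q)).add ((sh h3).const_mul (C * p)) |>.congr_deriv (by ring)
  · intro x
    obtain ⟨-, h1, h2, h3, h4⟩ := hasDerivAt_trig_add_hyp q p C (x - 1 / 2)
    exact ((sh h2).const_mul (-q ^ 2)).add ((sh h4).const_mul (C * p ^ 2)) |>.congr_deriv (by ring)
  · intro x
    obtain ⟨-, h1, h2, h3, h4⟩ := hasDerivAt_trig_add_hyp q p C (x - 1 / 2)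
    exact ((sh h1).const_mul (q ^ 3)).add ((sh h3).const_mul (C * p ^ 3)) |>.congr_deriv (by ring)
  · intro x hx
    refine le_of_eq ?_
    linear_combination (-C * cosh (p * (x - 1 / 2)) * (p ^ 2 + q ^ 2)) * hpq

theorem Adm.exists_margin {v : ℝ × ℝ → ℝ} (h : Adm (Rect 1) v) :
    ∃ δ : ℝ, 0 < δ ∧ δ < 1 / 2 ∧
      tsupport v ⊆ Set.Ioo δ (1 - δ) ×ˢ Set.Ioo δ (1 - δ) := by
  rcases (tsupport v).eq_empty_or_nonempty with he | hne
  · exact ⟨1 / 4, by norm_num, by norm_num, by simp [he]⟩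
  obtain ⟨p, hp, hmin⟩ := h.2.1.isCompact.exists_isMinOn hne
    (f := fun p : ℝ × ℝ => min (min p.1 (1 - p.1)) (min p.2 (1 - p.2)))
    (by fun_prop)
  set m := min (min p.1 (1 - p.1)) (min p.2 (1 - p.2)) with hm
  have hpos : 0 < m := by
    have := h.2.2 hp
    simp only [Rect, Set.mem_prod, Set.mem_Ioo, div_one] at this
    simp only [hm, lt_min_iff]
    exact ⟨⟨this.1.1, by linarith [this.1.2]⟩, this.2.1, by linarith [this.2.2]⟩
  have hm4 : min (m / 2) (1 / 4) ≤ m / 2 := min_le_left _ _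
  refine ⟨min (m / 2) (1 / 4), lt_min (by linarith) (by norm_num),
    lt_of_le_of_lt (min_le_right _ _) (by norm_num), fun r hr => ?_⟩
  have hle : m ≤ min (min r.1 (1 - r.1)) (min r.2 (1 - r.2)) := hmin hr
  simp only [le_min_iff] at hle
  simp only [Set.mem_prod, Set.mem_Ioo]
  refine ⟨⟨?_, ?_⟩, ?_, ?_⟩ <;> linarith [hle.1.1, hle.1.2, hle.2.1, hle.2.2]

theorem tsupport_pd_subset (w : ℝ × ℝ) (v : ℝ × ℝ → ℝ) : tsupport (pd w v) ⊆ tsupport v :=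
  tsupport_fderiv_apply_subset ℝ w

theorem pd_eq_zero {v : ℝ × ℝ → ℝ} {p : ℝ × ℝ} (hp : p ∉ tsupport v) (w : ℝ × ℝ) :
    pd w v p = 0 :=
  image_eq_zero_of_notMem_tsupport fun h => hp (tsupport_pd_subset w v h)

theorem pd_pd_eq_zero {v : ℝ × ℝ → ℝ} {p : ℝ × ℝ} (hp : p ∉ tsupport v) (w w' : ℝ × ℝ) :
    pd w' (pd w v) p = 0 :=
  pd_eq_zero (fun h => hp (tsupport_pd_subset w v h)) w'

theorem hasDerivAt_slice_fst {v : ℝ × ℝ → ℝ} (hv : Differentiable ℝ v) (x y : ℝ) :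
    HasDerivAt (fun x => v (x, y)) (pd (1, 0) v (x, y)) x := by
  have h := (hv (x, y)).hasFDerivAt.comp_hasDerivAt x
    ((hasDerivAt_id x).prodMk (hasDerivAt_const x y))
  exact h

theorem hasDerivAt_slice_snd {v : ℝ × ℝ → ℝ} (hv : Differentiable ℝ v) (x y : ℝ) :
    HasDerivAt (fun y => v (x, y)) (pd (0, 1) v (x, y)) y := by
  have h := (hv (x, y)).hasFDerivAt.comp_hasDerivAt y
    ((hasDerivAt_const y x).prodMk (hasDerivAt_id y))
  exact h

theorem integral_nonneg_of_forall_snd {f : ℝ × ℝ → ℝ} (hf : Integrable f)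
    (h : ∀ y, 0 ≤ ∫ x, f (x, y)) : 0 ≤ ∫ p, f p := by
  rw [Measure.volume_eq_prod, integral_prod_symm f hf]
  exact integral_nonneg h

theorem integral_nonneg_of_forall_fst {f : ℝ × ℝ → ℝ} (hf : Integrable f)
    (h : ∀ x, 0 ≤ ∫ y, f (x, y)) : 0 ≤ ∫ p, f p := by
  rw [Measure.volume_eq_prod, integral_prod f hf]
  exact integral_nonneg h

theorem integral_eq_zero_of_forall_snd {f : ℝ × ℝ → ℝ} (hf : Integrable f)
    (h : ∀ y, ∫ x, f (x, y) = 0) : ∫ p, f p = 0 := by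
  rw [Measure.volume_eq_prod, integral_prod_symm f hf]
  simp only [h, integral_zero]

theorem Adm.beam_fst {v : ℝ × ℝ → ℝ} (h : Adm (Rect 1) v)
    {c τ q p : ℝ} (hc0 : 0 ≤ c) (hτ : 0 ≤ τ) (hq : π ≤ q) (hq' : q ≤ 2 * π) (hp : 0 < p)
    (hpq : c * p ^ 2 = c * q ^ 2 + τ)
    (hcond : 0 ≤ q * sin (q / 2) * cosh (p / 2) + p * sinh (p / 2) * cos (q / 2)) :
    q ^ 2 * (c * q ^ 2 + τ) * (∫ p, v p ^ 2) ≤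
      c * (∫ p, uxx v p ^ 2) + τ * (∫ p, _root_.pd (1, 0) v p ^ 2) := by
  obtain ⟨δ, hδ, hδ', hsupp⟩ := h.exists_margin
  have hx := h.pd (1, 0)
  have hxx : Adm (Rect 1) (uxx v) := hx.pd (1, 0)
  have i1 := hxx.integrable_sq.const_mul c
  have i2 := hx.integrable_sq.const_mul τ
  have i3 := h.integrable_sq.const_mul (q ^ 2 * (c * q ^ 2 + τ))
  have i12 : Integrable (fun r => c * uxx v r ^ 2 + τ * _root_.pd (1, 0) v r ^ 2) := i1.add i2
  have hout : ∀ x y, x ∉ Set.Ioo δ (1 - δ) → (x, y) ∉ tsupport v := fun x y hxn hm =>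
    hxn (hsupp hm).1
  have key := integral_nonneg_of_forall_snd (i12.sub i3) fun y =>
    beam_lower_bound hδ hδ' (fun x => hasDerivAt_slice_fst h.differentiable x y)
      (fun x => hasDerivAt_slice_fst hx.differentiable x y)
      (hxx.continuous.comp (Continuous.prodMk_left y))
      (fun x hxn => ⟨image_eq_zero_of_notMem_tsupport (hout x y hxn),
        pd_eq_zero (hout x y hxn) _, pd_pd_eq_zero (hout x y hxn) _ _⟩)
      hc0 hτ hq hq' hp hpq hcond
  rw [integral_sub' i12 i3, integral_add i1 i2, integral_const_mul, integral_const_mul,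
    integral_const_mul] at key
  linarith

theorem Adm.beam_snd {v : ℝ × ℝ → ℝ} (h : Adm (Rect 1) v)
    {c τ q p : ℝ} (hc0 : 0 ≤ c) (hτ : 0 ≤ τ) (hq : π ≤ q) (hq' : q ≤ 2 * π) (hp : 0 < p)
    (hpq : c * p ^ 2 = c * q ^ 2 + τ)
    (hcond : 0 ≤ q * sin (q / 2) * cosh (p / 2) + p * sinh (p / 2) * cos (q / 2)) :
    q ^ 2 * (c * q ^ 2 + τ) * (∫ p, v p ^ 2) ≤
      c * (∫ p, uyy v p ^ 2) + τ * (∫ p, _root_.pd (0, 1) v p ^ 2) := by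
  obtain ⟨δ, hδ, hδ', hsupp⟩ := h.exists_margin
  have hy := h.pd (0, 1)
  have hyy : Adm (Rect 1) (uyy v) := hy.pd (0, 1)
  have i1 := hyy.integrable_sq.const_mul c
  have i2 := hy.integrable_sq.const_mul τ
  have i3 := h.integrable_sq.const_mul (q ^ 2 * (c * q ^ 2 + τ))
  have i12 : Integrable (fun r => c * uyy v r ^ 2 + τ * _root_.pd (0, 1) v r ^ 2) := i1.add i2
  have hout : ∀ x y, y ∉ Set.Ioo δ (1 - δ) → (x, y) ∉ tsupport v := fun x y hyn hm =>
    hyn (hsupp hm).2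
  have key := integral_nonneg_of_forall_fst (i12.sub i3) fun x =>
    beam_lower_bound hδ hδ' (fun y => hasDerivAt_slice_snd h.differentiable x y)
      (fun y => hasDerivAt_slice_snd hy.differentiable x y)
      (hyy.continuous.comp (Continuous.prodMk_right x))
      (fun y hyn => ⟨image_eq_zero_of_notMem_tsupport (hout x y hyn),
        pd_eq_zero (hout x y hyn) _, pd_pd_eq_zero (hout x y hyn) _ _⟩)
      hc0 hτ hq hq' hp hpq hcond
  rw [integral_sub' i12 i3, integral_add i1 i2, integral_const_mul, integral_const_mul,
    integral_const_mul] at key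
  linarith

theorem Adm.wirtinger_fst {v : ℝ × ℝ → ℝ} (h : Adm (Rect 1) v) :
    π ^ 2 * (∫ p, v p ^ 2) ≤ ∫ p, _root_.pd (1, 0) v p ^ 2 := by
  obtain ⟨δ, hδ, hδ', hsupp⟩ := h.exists_margin
  have hx := h.pd (1, 0)
  have i2 := hx.integrable_sq
  have i3 := h.integrable_sq.const_mul (π ^ 2)
  have hout : ∀ x y, x ∉ Set.Ioo δ (1 - δ) → (x, y) ∉ tsupport v := fun x y hxn hm =>
    hxn (hsupp hm).1
  have key := integral_nonneg_of_forall_snd (i2.sub i3) fun y =>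
    wirtinger hδ hδ' (fun x => hasDerivAt_slice_fst h.differentiable x y)
      (hx.continuous.comp (Continuous.prodMk_left y))
      (fun x hxn => ⟨image_eq_zero_of_notMem_tsupport (hout x y hxn),
        pd_eq_zero (hout x y hxn) _⟩)
  rw [integral_sub' i2 i3, integral_const_mul] at key
  linarith

/-- The form version of `(-∂ₓ² - π²)(-∂ᵧ² - π²) ≥ 0` on the unit square. -/
theorem Adm.mixed_lower_bound {v : ℝ × ℝ → ℝ} (h : Adm (Rect 1) v) :
    π ^ 2 * (∫ p, _root_.pd (1, 0) v p ^ 2) + π ^ 2 * (∫ p, _root_.pd (0, 1) v p ^ 2)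
      - π ^ 4 * (∫ p, v p ^ 2) ≤ ∫ p, uxy v p ^ 2 := by
  obtain ⟨δ, hδ, hδ', hsupp⟩ := h.exists_margin
  have hx := h.pd (1, 0)
  have hy := h.pd (0, 1)
  have hxy : Adm (Rect 1) (uxy v) := hx.pd (0, 1)
  have hcomm : uxy v = _root_.pd (1, 0) (_root_.pd (0, 1) v) := h.pd_comm _ _
  have hk := continuous_frozenCot hδ hδ'
  have hkx : Continuous fun p : ℝ × ℝ => frozenCot δ p.1 := hk.comp continuous_fst
  have hvc := h.continuous
  have hxc := hx.continuous
  have hyc := hy.continuous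
  have hxyc := hxy.continuous
  have hout₁ : ∀ x y, x ∉ Set.Ioo δ (1 - δ) → (x, y) ∉ tsupport v := fun x y hn hm =>
    hn (hsupp hm).1
  have hout₂ : ∀ x y, y ∉ Set.Ioo δ (1 - δ) → (x, y) ∉ tsupport v := fun x y hn hm =>
    hn (hsupp hm).2
  have hint : ∀ {f : ℝ × ℝ → ℝ}, Continuous f → (∀ p, p ∉ tsupport v → f p = 0) →
      Integrable f := fun hf h0 =>
    hf.integrable_of_hasCompactSupport (HasCompactSupport.intro h.2.1.isCompact fun p hp => h0 p hp)
  let G₁ : ℝ × ℝ → ℝ := fun p =>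
    (uxy v p - frozenCot δ p.1 * _root_.pd (0, 1) v p) ^ 2 -
      π ^ 2 * (_root_.pd (1, 0) v p - frozenCot δ p.1 * v p) ^ 2
  let G₂ : ℝ × ℝ → ℝ := fun p => uxy v p ^ 2 - π ^ 2 * _root_.pd (0, 1) v p ^ 2
    - (uxy v p - frozenCot δ p.1 * _root_.pd (0, 1) v p) ^ 2
  let G₃ : ℝ × ℝ → ℝ := fun p => _root_.pd (1, 0) v p ^ 2 - π ^ 2 * v p ^ 2
    - (_root_.pd (1, 0) v p - frozenCot δ p.1 * v p) ^ 2
  have hz : ∀ p, p ∉ tsupport v → v p = 0 ∧ _root_.pd (1, 0) v p = 0 ∧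
      _root_.pd (0, 1) v p = 0 ∧ uxy v p = 0 := fun p hp =>
    ⟨image_eq_zero_of_notMem_tsupport hp, pd_eq_zero hp _, pd_eq_zero hp _, pd_pd_eq_zero hp _ _⟩
  have I₁ : Integrable G₁ := hint (by fun_prop) fun p hp => by simp [G₁, hz p hp]
  have I₂ : Integrable G₂ := hint (by fun_prop) fun p hp => by simp [G₂, hz p hp]
  have I₃ : Integrable G₃ := hint (by fun_prop) fun p hp => by simp [G₃, hz p hp]
  have J₁ : 0 ≤ ∫ p, G₁ p := integral_nonneg_of_forall_fst I₁ fun x =>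
    wirtinger hδ hδ'
      (w := fun y => _root_.pd (1, 0) v (x, y) - frozenCot δ x * v (x, y))
      (w₁ := fun y => uxy v (x, y) - frozenCot δ x * _root_.pd (0, 1) v (x, y))
      (fun y => (hasDerivAt_slice_snd hx.differentiable x y).sub
        ((hasDerivAt_slice_snd h.differentiable x y).const_mul _))
      (by fun_prop)
      (fun y hn => by simp [hz _ (hout₂ x y hn)])
  have J₂ : ∫ p, G₂ p = 0 := integral_eq_zero_of_forall_snd I₂ fun y =>
    integral_sq_sub_frozenCot hδ hδ' (w := fun x => _root_.pd (0, 1) v (x, y))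
      (w₁ := fun x => uxy v (x, y))
      (fun x => by rw [hcomm]; exact hasDerivAt_slice_fst hy.differentiable x y)
      (by fun_prop) (fun x hn => by simp [hz _ (hout₁ x y hn)])
  have J₃ : ∫ p, G₃ p = 0 := integral_eq_zero_of_forall_snd I₃ fun y =>
    integral_sq_sub_frozenCot hδ hδ' (w := fun x => v (x, y))
      (w₁ := fun x => _root_.pd (1, 0) v (x, y))
      (fun x => hasDerivAt_slice_fst h.differentiable x y)
      (by fun_prop) (fun x hn => by simp [hz _ (hout₁ x y hn)])
  have e1 : ∫ p, (G₁ p + G₂ p - π ^ 2 * G₃ p) = ∫ p, G₁ p := by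
    have I₁₂ : Integrable (fun p => G₁ p + G₂ p) := I₁.add I₂
    rw [integral_sub I₁₂ (I₃.const_mul _), integral_add I₁ I₂, integral_const_mul, J₂, J₃]
    ring
  have e2 : (fun p => G₁ p + G₂ p - π ^ 2 * G₃ p) = fun p =>
      uxy v p ^ 2 + π ^ 4 * v p ^ 2
        - (π ^ 2 * _root_.pd (1, 0) v p ^ 2 + π ^ 2 * _root_.pd (0, 1) v p ^ 2) := by
    funext p
    simp only [G₁, G₂, G₃]
    ring
  have k1 := hxy.integrable_sq
  have k2 := h.integrable_sq.const_mul (π ^ 4)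
  have k3 := hx.integrable_sq.const_mul (π ^ 2)
  have k4 := hy.integrable_sq.const_mul (π ^ 2)
  have k12 : Integrable (fun p => uxy v p ^ 2 + π ^ 4 * v p ^ 2) := k1.add k2
  have k34 : Integrable (fun p =>
    π ^ 2 * _root_.pd (1, 0) v p ^ 2 + π ^ 2 * _root_.pd (0, 1) v p ^ 2) := k3.add k4
  rw [e2, integral_sub k12 k34, integral_add k1 k2, integral_add k3 k4, integral_const_mul,
    integral_const_mul, integral_const_mul] at e1
  linarith

theorem sin_lower_bound {x : ℝ} (hx : 0 ≤ x) (hx' : x ≤ 1) :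
    3 * (x / 3 - (x / 3) ^ 3 / 6) - 4 * (x / 3 - (x / 3) ^ 3 / 6) ^ 3 ≤ sin x := by
  have h1 := sin_ge_sub_cube (x := x / 3) (by positivity)
  have h2 : sin (x / 3) ≤ x / 3 := sin_le (by positivity)
  have h0 : 0 ≤ x / 3 - (x / 3) ^ 3 / 6 := by nlinarith [sq_nonneg x, mul_nonneg hx hx]
  have e := sin_three_mul (x / 3)
  rw [show 3 * (x / 3) = x by ring] at e
  rw [e]
  set u := x / 3 - (x / 3) ^ 3 / 6
  set s := sin (x / 3)
  have hs : s ≤ 1 / 3 := by linarith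
  have : 4 * (s ^ 2 + s * u + u ^ 2) ≤ 3 := by nlinarith
  nlinarith [mul_nonneg (sub_nonneg.mpr h1) (sub_nonneg.mpr this)]

theorem cos_upper_bound {x : ℝ} (hx : 0 ≤ x) (hx' : x ≤ 1) :
    cos x ≤ 1 - x ^ 2 / 2 + x ^ 4 / 24 := by
  have h1 := sin_ge_sub_cube (x := x / 2) (by positivity)
  have h0 : 0 ≤ x / 2 - (x / 2) ^ 3 / 6 := by nlinarith [sq_nonneg x, mul_nonneg hx hx]
  have e := cos_sq' (x / 2)
  have e2 := cos_sq (x / 2)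
  rw [show 2 * (x / 2) = x by ring] at e2
  have h3 : (x / 2 - (x / 2) ^ 3 / 6) ^ 2 ≤ sin (x / 2) ^ 2 := by gcongr
  nlinarith [sq_nonneg (x ^ 3)]

theorem beam_condition {p q P M e : ℝ} (hp : 0 < p) (hpP : p ≤ P) (hM : exp P ≤ M)
    (hq : 0 < q) (he : 0 ≤ e) (heq : e ≤ 3 * π / 4 - q / 2) (heq' : 3 * π / 4 - q / 2 ≤ 1 / 2)
    (hPq : q ≤ P * (1 - 2 / (M + 1)))
    (hnum : 0 ≤ (q + P * (1 - 2 / (M + 1))) *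
        (3 * (e / 3 - (e / 3) ^ 3 / 6) - 4 * (e / 3 - (e / 3) ^ 3 / 6) ^ 3)
      - (P * (1 - 2 / (M + 1)) - q) * (1 - e ^ 2 / 2 + e ^ 4 / 24)) :
    0 ≤ q * sin (q / 2) * cosh (p / 2) + p * sinh (p / 2) * cos (q / 2) := by
  have hMpos : 0 < M := (exp_pos P).trans_le hM
  set T := 1 - 2 / (M + 1) with hT
  have hT0 : 0 < T := by
    by_contra hcon
    have : P * T ≤ 0 := mul_nonpos_of_nonneg_of_nonpos (hp.le.trans hpP) (not_lt.mp hcon)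
    linarith
  set ε := 3 * π / 4 - q / 2 with hε
  have hsin : sin e ≤ sin ε := sin_le_sin_of_le_of_le_pi_div_two
    (by linarith [pi_pos]) (by linarith [pi_gt_three]) heq
  have hcos : cos ε ≤ cos e := cos_le_cos_of_nonneg_of_le_pi he (by linarith [pi_gt_three]) heq
  have hcs : sin ε ≤ cos ε := by
    have h1 : sin ε ≤ ε := sin_le (he.trans heq)
    have h2 := one_sub_sq_div_two_le_cos (x := ε)
    nlinarith
  have hsinh : sinh (p / 2) ≤ T * cosh (p / 2) := by
    have h1 : exp (p / 2) = exp p * exp (-(p / 2)) := by rw [← exp_add]; ring_nf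
    have h2 : exp p ≤ M := (exp_le_exp.mpr hpP).trans hM
    have hM1 : M + 1 ≠ 0 := by positivity
    have h3 : T * (M + 1) = M - 1 := by rw [hT]; field_simp; ring
    have hT1 : 0 ≤ 1 - T := by
      have : 0 ≤ 2 / (M + 1) := by positivity
      linarith
    rw [sinh_eq, cosh_eq, h1]
    have h4 : (1 - T) * exp p ≤ 1 + T := by nlinarith [mul_le_mul_of_nonneg_left h2 hT1]
    nlinarith [mul_le_mul_of_nonneg_right h4 (exp_pos (-(p / 2))).le]
  have hθ : q / 2 = 3 * π / 4 - ε := by rw [hε]; ring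
  have hs34 : sin (3 * π / 4) = √2 / 2 := by
    rw [show 3 * π / 4 = π - π / 4 by ring, sin_pi_sub, sin_pi_div_four]
  have hc34 : cos (3 * π / 4) = -(√2 / 2) := by
    rw [show 3 * π / 4 = π - π / 4 by ring, cos_pi_sub, cos_pi_div_four]
  have hmain : 0 ≤ (q + P * T) * sin ε - (P * T - q) * cos ε := by
    have hs := sin_lower_bound he (by linarith)
    have hc := cos_upper_bound he (by linarith)
    have h1 := mul_le_mul_of_nonneg_left (hs.trans hsin) (show 0 ≤ q + P * T by linarith)
    have h2 := mul_le_mul_of_nonneg_left (hcos.trans hc) (show 0 ≤ P * T - q by linarith)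
    linarith
  have h5 : p * sinh (p / 2) * (cos ε - sin ε) ≤ P * T * cosh (p / 2) * (cos ε - sin ε) := by
    refine mul_le_mul_of_nonneg_right ?_ (by linarith)
    calc p * sinh (p / 2) ≤ p * (T * cosh (p / 2)) := by gcongr
      _ ≤ P * (T * cosh (p / 2)) :=
        mul_le_mul_of_nonneg_right hpP (mul_nonneg hT0.le (cosh_pos _).le)
      _ = P * T * cosh (p / 2) := by ring
  have h6 : 0 ≤ q * cosh (p / 2) * (cos ε + sin ε) - p * sinh (p / 2) * (cos ε - sin ε) := by
    nlinarith [mul_nonneg hmain (cosh_pos (p / 2)).le]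
  have hsθ : sin (q / 2) = √2 / 2 * (cos ε + sin ε) := by rw [hθ, sin_sub, hs34, hc34]; ring
  have hcθ : cos (q / 2) = -(√2 / 2 * (cos ε - sin ε)) := by rw [hθ, cos_sub, hs34, hc34]; ring
  rw [hsθ, hcθ]
  have := mul_nonneg h6 (show 0 ≤ √2 / 2 by positivity)
  linarith

theorem exp_upper_bound {n : ℕ} {x : ℝ} (hx : 0 ≤ x) (hx' : x ≤ 1) :
    exp (n + x) ≤ 2.7182818286 ^ n * (1 + x + x ^ 2 / 2 + x ^ 3 / 6 + x ^ 4 / 24 + x ^ 5 / 120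
      + x ^ 6 / 720 + x ^ 7 * 8 / 35280) := by
  rw [exp_add]
  have h1 : exp (n : ℝ) ≤ 2.7182818286 ^ n := by
    rw [← mul_one (n : ℝ), exp_nat_mul]
    exact pow_le_pow_left₀ (exp_pos _).le exp_one_lt_d9.le n
  have h2 := exp_bound' hx hx' (n := 7) (by norm_num)
  refine mul_le_mul h1 (h2.trans (le_of_eq ?_)) (exp_pos _).le (by positivity)
  simp [Finset.sum_range_succ, Nat.factorial]
  ring

theorem exists_beam_condition {c q P M e : ℝ} (hc : 0 < c) (hq : 0 < q) (hP : 0 ≤ P)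
    (hM : exp P ≤ M) (he : 0 ≤ e)
    (heq : e ≤ 3 * π / 4 - q / 2) (heq' : 3 * π / 4 - q / 2 ≤ 1 / 2)
    (hPc : c * q ^ 2 + 2 * π ^ 2 ≤ c * P ^ 2)
    (hPq : q ≤ P * (1 - 2 / (M + 1)))
    (hnum : 0 ≤ (q + P * (1 - 2 / (M + 1))) *
        (3 * (e / 3 - (e / 3) ^ 3 / 6) - 4 * (e / 3 - (e / 3) ^ 3 / 6) ^ 3)
      - (P * (1 - 2 / (M + 1)) - q) * (1 - e ^ 2 / 2 + e ^ 4 / 24)) :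
    ∃ p, 0 < p ∧ c * p ^ 2 = c * q ^ 2 + 2 * π ^ 2 ∧
      0 ≤ q * sin (q / 2) * cosh (p / 2) + p * sinh (p / 2) * cos (q / 2) := by
  have hpos : 0 < q ^ 2 + 2 * π ^ 2 / c := by positivity
  have hsq : c * √(q ^ 2 + 2 * π ^ 2 / c) ^ 2 = c * q ^ 2 + 2 * π ^ 2 := by
    rw [sq_sqrt hpos.le]; field_simp
  refine ⟨√(q ^ 2 + 2 * π ^ 2 / c), sqrt_pos.mpr hpos, hsq, ?_⟩
  refine beam_condition (sqrt_pos.mpr hpos) ?_ hM hq he heq heq' hPq hnum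
  refine abs_le_of_sq_le_sq' ?_ hP |>.2
  exact le_of_mul_le_mul_left (by rw [hsq]; exact hPc) hc

theorem Adm.beam_snd_threshold {v : ℝ × ℝ → ℝ} (h : Adm (Rect 1) v) :
    4.4024 ^ 2 * (1.032695 ^ 4 * 4.4024 ^ 2 + 2 * π ^ 2) * (∫ p, v p ^ 2) ≤
      1.032695 ^ 4 * (∫ p, uyy v p ^ 2) + 2 * π ^ 2 * (∫ p, _root_.pd (0, 1) v p ^ 2) := by
  have hπ := pi_gt_d20
  have hπ' := pi_lt_d20
  have hπ2 : π ^ 2 < 3.14159265358979323847 ^ 2 := by gcongr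
  have hM : exp (6.06108886 : ℝ) ≤ 428.86 := by
    have := exp_upper_bound (n := 6) (x := 0.06108886) (by norm_num) (by norm_num)
    norm_num at this ⊢
    linarith
  obtain ⟨p, hp, hpq, hcond⟩ := exists_beam_condition (c := 1.032695 ^ 4) (q := 4.4024)
    (P := 6.06108886) (M := 428.86) (e := 0.15499449) (by norm_num) (by norm_num) (by norm_num)
    hM (by norm_num) (by linarith) (by linarith) (by linarith) (by norm_num) (by norm_num)
  exact h.beam_snd (by norm_num) (by positivity) (by linarith) (by linarith) hp hpq hcond

theorem Adm.beam_fst_threshold {v : ℝ × ℝ → ℝ} (h : Adm (Rect 1) v) :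
    4.331767 ^ 2 * ((1.032695 ^ 4)⁻¹ * 4.331767 ^ 2 + 2 * π ^ 2) * (∫ p, v p ^ 2) ≤
      (1.032695 ^ 4)⁻¹ * (∫ p, uxx v p ^ 2) + 2 * π ^ 2 * (∫ p, _root_.pd (1, 0) v p ^ 2) := by
  have hπ := pi_gt_d20
  have hπ' := pi_lt_d20
  have hπ2 : π ^ 2 < 3.14159265358979323847 ^ 2 := by gcongr
  have hM : exp (6.4198359 : ℝ) ≤ 613.93 := by
    have := exp_upper_bound (n := 6) (x := 0.4198359) (by norm_num) (by norm_num)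
    norm_num at this ⊢
    linarith
  obtain ⟨p, hp, hpq, hcond⟩ := exists_beam_condition (c := (1.032695 ^ 4)⁻¹) (q := 4.331767)
    (P := 6.4198359) (M := 613.93) (e := 0.19031099) (by norm_num) (by norm_num) (by norm_num)
    hM (by norm_num) (by linarith) (by linarith) (by linarith) (by norm_num) (by norm_num)
  exact h.beam_fst (by norm_num) (by positivity) (by linarith) (by linarith) hp hpq hcond

theorem Adm.clamped_snd {v : ℝ × ℝ → ℝ} (h : Adm (Rect 1) v) :
    493 * (∫ p, v p ^ 2) ≤ ∫ p, uyy v p ^ 2 := by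
  have hπ := pi_gt_d20
  have hs34 : sin (3 * π / 2 / 2) = √2 / 2 := by
    rw [show 3 * π / 2 / 2 = π - π / 4 by ring, sin_pi_sub, sin_pi_div_four]
  have hc34 : cos (3 * π / 2 / 2) = -(√2 / 2) := by
    rw [show 3 * π / 2 / 2 = π - π / 4 by ring, cos_pi_sub, cos_pi_div_four]
  have key := h.beam_snd (c := 1) (τ := 0) (q := 3 * π / 2) (p := 3 * π / 2) zero_le_one le_rfl
    (by linarith) (by linarith) (by positivity) (by ring) (by
      rw [hs34, hc34]
      have h1 := (sinh_lt_cosh (3 * π / 2 / 2)).le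
      have h2 : 0 ≤ 3 * π / 2 * (√2 / 2) := by positivity
      nlinarith [mul_nonneg h2 (sub_nonneg.mpr h1)])
  have hD : 0 ≤ ∫ p, v p ^ 2 := integral_nonneg fun p => sq_nonneg _
  have h4 : (493 : ℝ) ≤ (3 * π / 2) ^ 4 := by
    have : (3 * 3.1415926 / 2 : ℝ) ^ 4 ≤ (3 * π / 2) ^ 4 := by gcongr; linarith
    refine le_trans ?_ this
    norm_num
  nlinarith [mul_le_mul_of_nonneg_right h4 hD]

theorem Adm.lower_bound_energy {v : ℝ × ℝ → ℝ} (h : Adm (Rect 1) v) {t : ℝ}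
    (ht : 1.032695 ^ 4 ≤ t) : 1294.9346 * (∫ p, v p ^ 2) ≤ energy t v := by
  have hπ := pi_gt_d20
  have hπ' := pi_lt_d20
  have hD : 0 ≤ ∫ p, v p ^ 2 := integral_nonneg fun p => sq_nonneg _
  have h1 := h.beam_snd_threshold
  have h2 := h.beam_fst_threshold
  have h3 := h.clamped_snd
  have h4 := h.wirtinger_fst
  have h5 := h.mixed_lower_bound
  unfold energy
  set A := ∫ p, uxx v p ^ 2
  set B := ∫ p, uxy v p ^ 2
  set C := ∫ p, uyy v p ^ 2
  set D := ∫ p, v p ^ 2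
  set E := ∫ p, _root_.pd (1, 0) v p ^ 2
  set F := ∫ p, _root_.pd (0, 1) v p ^ 2
  set t₀ : ℝ := 1.032695 ^ 4 with ht₀
  have ht₀pos : 0 < t₀ := by rw [ht₀]; norm_num
  have htpos : 0 < t := ht₀pos.trans_le ht
  set L₁ := 4.4024 ^ 2 * (t₀ * 4.4024 ^ 2 + 2 * π ^ 2)
  set L₂ := 4.331767 ^ 2 * (t₀⁻¹ * 4.331767 ^ 2 + 2 * π ^ 2)
  have hP1 : (9.86960440 : ℝ) ≤ π ^ 2 := by nlinarith
  have hP2 : π ^ 2 ≤ 9.86960441 := by nlinarith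
  have hP4 : π ^ 4 ≤ 9.86960441 ^ 2 := by nlinarith
  have hP4' : (9.86960440 : ℝ) ^ 2 ≤ π ^ 4 := by nlinarith
  have hL : 1294.9346 ≤ L₁ + L₂ - 2 * π ^ 4 := by
    simp only [L₁, L₂, ht₀]
    norm_num at hP1 hP4 ⊢
    linarith
  have hL2 : L₂ - 2 * π ^ 4 ≤ 490 := by
    simp only [L₂, ht₀]
    norm_num at hP2 hP4' ⊢
    linarith
  have ht0' : (1 : ℝ) ≤ t₀ := by rw [ht₀]; norm_num
  have hCt : (t - t₀) * (493 * D) ≤ (t - t₀) * C :=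
    mul_le_mul_of_nonneg_left h3 (sub_nonneg.mpr ht)
  have hs : t₀ * t⁻¹ ≤ 1 := by
    rw [← div_eq_mul_inv]; exact (div_le_one htpos).mpr ht
  have hA : t₀ * t⁻¹ * (L₂ * D) + (1 - t₀ * t⁻¹) * (2 * π ^ 4 * D) ≤
      t⁻¹ * A + 2 * π ^ 2 * E := by
    have e1 := mul_le_mul_of_nonneg_left h2 (show 0 ≤ t₀ * t⁻¹ by positivity)
    have e2 := mul_le_mul_of_nonneg_left h4
      (mul_nonneg (sub_nonneg.mpr hs) (show 0 ≤ 2 * π ^ 2 by positivity))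
    have e3 : t₀ * t⁻¹ * (t₀⁻¹ * A + 2 * π ^ 2 * E) = t⁻¹ * A + t₀ * t⁻¹ * (2 * π ^ 2 * E) := by
      field_simp
    rw [e3] at e1
    have e4 : (1 - t₀ * t⁻¹) * (2 * π ^ 2) * (π ^ 2 * D) =
      (1 - t₀ * t⁻¹) * (2 * π ^ 4 * D) := by ring
    linarith
  have hr : 1 - t₀ * t⁻¹ ≤ t - t₀ := by
    have e1 : t * t⁻¹ = 1 := mul_inv_cancel₀ htpos.ne'
    have e2 : t⁻¹ ≤ 1 := inv_le_one_of_one_le₀ (ht0'.trans ht)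
    nlinarith [mul_le_mul_of_nonneg_left e2 (sub_nonneg.mpr ht)]
  have hgain : (1 - t₀ * t⁻¹) * ((L₂ - 2 * π ^ 4) * D) ≤ (t - t₀) * (493 * D) := by
    calc (1 - t₀ * t⁻¹) * ((L₂ - 2 * π ^ 4) * D)
        ≤ (1 - t₀ * t⁻¹) * (493 * D) :=
          mul_le_mul_of_nonneg_left (mul_le_mul_of_nonneg_right (by linarith) hD) (by linarith)
      _ ≤ (t - t₀) * (493 * D) := mul_le_mul_of_nonneg_right hr (by positivity)
  have hLD := mul_le_mul_of_nonneg_right hL hD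
  clear_value L₁ L₂ t₀ A B C D E F
  linear_combination hLD + hgain + hA + hCt + h1 + 2 * h5

/-- `F n` are smooth, have uniformly bounded derivatives up to order two on `[0, 1]`, and
eventually coincide with `g` near each interior point of `[0, 1]`. -/
structure InteriorApprox (F : ℕ → ℝ → ℝ) (g : ℝ → ℝ) : Prop where
  smooth : ∀ n, ContDiff ℝ (⊤ : ℕ∞) (F n)
  bound : ∃ C, ∀ n, ∀ x ∈ Set.Icc (0 : ℝ) 1,
    |F n x| ≤ C ∧ |deriv (F n) x| ≤ C ∧ |deriv (deriv (F n)) x| ≤ C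
  eventuallyEq : ∀ x ∈ Set.Ioo (0 : ℝ) 1, ∀ᶠ n in atTop, F n =ᶠ[nhds x] g

theorem contDiff_deriv_top {f : ℝ → ℝ} (hf : ContDiff ℝ (⊤ : ℕ∞) f) :
    ContDiff ℝ (⊤ : ℕ∞) (deriv f) := (contDiff_infty_iff_deriv.mp hf).2

theorem differentiable_of_top {f : ℝ → ℝ} (hf : ContDiff ℝ (⊤ : ℕ∞) f) : Differentiable ℝ f :=
  (contDiff_infty_iff_deriv.mp hf).1

theorem deriv_mul_fun {f g : ℝ → ℝ} (hf : ContDiff ℝ (⊤ : ℕ∞) f) (hg : ContDiff ℝ (⊤ : ℕ∞) g) :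
    deriv (fun x => f x * g x) = fun x => deriv f x * g x + f x * deriv g x := by
  funext x
  exact deriv_fun_mul (differentiable_of_top hf x) (differentiable_of_top hg x)

theorem deriv_deriv_mul_fun {f g : ℝ → ℝ} (hf : ContDiff ℝ (⊤ : ℕ∞) f)
    (hg : ContDiff ℝ (⊤ : ℕ∞) g) :
    deriv (deriv (fun x => f x * g x)) = fun x => deriv (deriv f) x * g x
      + 2 * (deriv f x * deriv g x) + f x * deriv (deriv g) x := by
  have hf' := contDiff_deriv_top hf
  have hg' := contDiff_deriv_top hg
  rw [deriv_mul_fun hf hg]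
  funext x
  rw [deriv_fun_add (differentiable_of_top (hf'.mul hg) x)
    (differentiable_of_top (hf.mul hg') x), congrFun (deriv_mul_fun hf' hg) x,
    congrFun (deriv_mul_fun hf hg') x]
  ring

theorem InteriorApprox.mul {F G : ℕ → ℝ → ℝ} {f g : ℝ → ℝ} (hF : InteriorApprox F f)
    (hG : InteriorApprox G g) :
    InteriorApprox (fun n x => F n x * G n x) (fun x => f x * g x) := by
  refine ⟨fun n => (hF.smooth n).mul (hG.smooth n), ?_, fun x hx => ?_⟩
  · obtain ⟨C, hC⟩ := hF.bound
    obtain ⟨D, hD⟩ := hG.bound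
    refine ⟨4 * (C * D), fun n x hx => ?_⟩
    obtain ⟨c0, c1, c2⟩ := hC n x hx
    obtain ⟨d0, d1, d2⟩ := hD n x hx
    have hC0 : 0 ≤ C := (abs_nonneg _).trans c0
    have hD0 : 0 ≤ D := (abs_nonneg _).trans d0
    have key : ∀ {a b : ℝ}, |a| ≤ C → |b| ≤ D → |a * b| ≤ C * D := fun ha hb => by
      rw [abs_mul]; exact mul_le_mul ha hb (abs_nonneg _) hC0
    have hCD : 0 ≤ C * D := mul_nonneg hC0 hD0
    rw [deriv_deriv_mul_fun (hF.smooth n) (hG.smooth n), deriv_mul_fun (hF.smooth n) (hG.smooth n)]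
    have k00 := abs_le.mp (key c0 d0)
    have k10 := abs_le.mp (key c1 d0)
    have k01 := abs_le.mp (key c0 d1)
    have k20 := abs_le.mp (key c2 d0)
    have k11 := abs_le.mp (key c1 d1)
    have k02 := abs_le.mp (key c0 d2)
    refine ⟨abs_le.mpr ⟨?_, ?_⟩, abs_le.mpr ⟨?_, ?_⟩, abs_le.mpr ⟨?_, ?_⟩⟩ <;> linarith
  · filter_upwards [hF.eventuallyEq x hx, hG.eventuallyEq x hx] with n h1 h2
    exact h1.mul h2

theorem interiorApprox_const {h : ℝ → ℝ} (hh : ContDiff ℝ (⊤ : ℕ∞) h) :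
    InteriorApprox (fun _ => h) h := by
  refine ⟨fun _ => hh, ?_, fun x _ => Eventually.of_forall fun _ => EventuallyEq.rfl⟩
  have b : ∀ f : ℝ → ℝ, Continuous f → ∃ C, ∀ x ∈ Set.Icc (0 : ℝ) 1, |f x| ≤ C := fun f hf =>
    isCompact_Icc.exists_bound_of_continuousOn hf.continuousOn
  obtain ⟨C0, h0⟩ := b _ hh.continuous
  obtain ⟨C1, h1⟩ := b _ (contDiff_deriv_top hh).continuous
  obtain ⟨C2, h2⟩ := b _ (contDiff_deriv_top (contDiff_deriv_top hh)).continuous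
  refine ⟨max C0 (max C1 C2), fun _ x hx => ⟨?_, ?_, ?_⟩⟩
  · exact (h0 x hx).trans (by simp)
  · exact (h1 x hx).trans (by simp)
  · exact (h2 x hx).trans (by simp)

theorem deriv_comp_one_sub (f : ℝ → ℝ) :
    deriv (fun x => f (1 - x)) = fun x => -deriv f (1 - x) := by
  funext x
  exact deriv_comp_const_sub f 1 x

theorem InteriorApprox.reflect {F : ℕ → ℝ → ℝ} {f : ℝ → ℝ} (hF : InteriorApprox F f) :
    InteriorApprox (fun n x => F n (1 - x)) (fun x => f (1 - x)) := by
  refine ⟨fun n => (hF.smooth n).comp (contDiff_const.sub contDiff_id), ?_, fun x hx => ?_⟩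
  · obtain ⟨C, hC⟩ := hF.bound
    refine ⟨C, fun n x hx => ?_⟩
    have := hC n (1 - x) ⟨by linarith [hx.2], by linarith [hx.1]⟩
    rw [deriv_comp_one_sub, deriv.fun_neg', deriv_comp_one_sub]
    simpa using this
  · filter_upwards [hF.eventuallyEq (1 - x) ⟨by linarith [hx.2], by linarith [hx.1]⟩] with n hn
    have hc : Tendsto (fun y : ℝ => 1 - y) (nhds x) (nhds (1 - x)) :=
      (continuous_const.sub continuous_id).tendsto x
    exact hc.eventually hn

/-- A smooth function vanishing for `z ≤ 1` and equal to `z ^ 2` for `z ≥ 2`. -/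
def cutSq (z : ℝ) : ℝ := z ^ 2 * smoothTransition (z - 1)

theorem contDiff_cutSq : ContDiff ℝ (⊤ : ℕ∞) cutSq :=
  (contDiff_id.pow 2).mul (smoothTransition.contDiff.comp (contDiff_id.sub contDiff_const))

theorem cutSq_of_le {z : ℝ} (hz : z ≤ 1) : cutSq z = 0 := by
  rw [cutSq, smoothTransition.zero_of_nonpos (by linarith), mul_zero]

theorem cutSq_of_ge {z : ℝ} (hz : 2 ≤ z) : cutSq z = z ^ 2 := by
  rw [cutSq, smoothTransition.one_of_one_le (by linarith), mul_one]

theorem exists_bound_cutSq : ∃ K, ∀ z, 0 ≤ z →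
    |cutSq z| ≤ K * z ^ 2 ∧ |deriv cutSq z| ≤ K * z ∧ |deriv (deriv cutSq) z| ≤ K := by
  have hs := contDiff_cutSq
  have hs' := contDiff_deriv_top hs
  obtain ⟨K1, hK1⟩ := isCompact_Icc (a := (0 : ℝ)) (b := 2) |>.exists_bound_of_continuousOn
    (contDiff_deriv_top hs').continuous.continuousOn
  have hK : ∀ z, 0 ≤ z → |deriv (deriv cutSq) z| ≤ max K1 2 := by
    intro z hz
    rcases le_or_gt z 2 with h | h
    · exact (hK1 z ⟨hz, h⟩).trans (le_max_left _ _)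
    · have e : cutSq =ᶠ[nhds z] fun y => y ^ 2 := by
        filter_upwards [lt_mem_nhds h] with y hy using cutSq_of_ge hy.le
      rw [e.deriv.deriv_eq]
      have : deriv (fun y : ℝ => y ^ 2) = fun y => 2 * y := by funext y; simp
      rw [this]
      have : deriv (fun y : ℝ => 2 * y) z = 2 := by simp
      rw [this]
      simp
  have e0 : cutSq =ᶠ[nhds 0] fun _ => 0 := by
    filter_upwards [gt_mem_nhds (show (0 : ℝ) < 1 by norm_num)] with y hy using cutSq_of_le hy.le
  have h0 : cutSq 0 = 0 := cutSq_of_le zero_le_one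
  have h1 : deriv cutSq 0 = 0 := by rw [e0.deriv_eq]; simp
  have hK' : ∀ z, 0 ≤ z → |deriv cutSq z| ≤ max K1 2 * z := by
    intro z hz
    have := (convex_Ici (0 : ℝ)).norm_image_sub_le_of_norm_deriv_le (f := deriv cutSq)
      (fun x _ => differentiable_of_top hs' x) (fun x hx => hK x hx) Set.self_mem_Ici hz
    simpa [h1, abs_of_nonneg hz] using this
  refine ⟨max K1 2, fun z hz => ⟨?_, hK' z hz, hK z hz⟩⟩
  have := (convex_Icc (0 : ℝ) z).norm_image_sub_le_of_norm_deriv_le (f := cutSq)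
    (C := max K1 2 * z)
    (fun x _ => differentiable_of_top hs x) (fun x hx => (hK' x hx.1).trans (by
      have : 0 ≤ max K1 2 := by simp
      gcongr
      exact hx.2)) (Set.left_mem_Icc.mpr hz) (Set.right_mem_Icc.mpr hz)
  simpa [h0, abs_of_nonneg hz, pow_two, mul_assoc] using this

/-- Rescaled cutoffs converging to `x ^ 2` on `(0, ∞)`. -/
def scaledCutSq (n : ℕ) (x : ℝ) : ℝ := ((n : ℝ) + 1)⁻¹ ^ 2 * cutSq ((n + 1) * x)

theorem interiorApprox_scaledCutSq : InteriorApprox scaledCutSq (fun x => x ^ 2) := by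
  have hN : ∀ n : ℕ, (0 : ℝ) < n + 1 := fun n => by positivity
  have hder : ∀ (f : ℝ → ℝ) (a c : ℝ),
      deriv (fun x => a * f (c * x)) = fun x => a * (c * deriv f (c * x)) := by
    intro f a c
    funext x
    rw [deriv_const_mul_field, deriv_comp_mul_left, smul_eq_mul]
  have hd : ∀ n, deriv (scaledCutSq n) = fun x => ((n : ℝ) + 1)⁻¹ * deriv cutSq ((n + 1) * x) := by
    intro n
    unfold scaledCutSq
    rw [hder]
    funext x
    have := (hN n).ne'
    field_simp
  have hdd : ∀ n, deriv (deriv (scaledCutSq n)) = fun x => deriv (deriv cutSq) ((n + 1) * x) := by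
    intro n
    rw [hd, hder]
    funext x
    have := (hN n).ne'
    field_simp
  refine ⟨fun n => contDiff_const.mul (contDiff_cutSq.comp (contDiff_const.mul contDiff_id)),
    ?_, fun x hx => ?_⟩
  · obtain ⟨K, hK⟩ := exists_bound_cutSq
    refine ⟨K, fun n x hx => ?_⟩
    have hn := hN n
    obtain ⟨k0, k1, k2⟩ := hK ((n + 1) * x) (mul_nonneg hn.le hx.1)
    have hK0 : 0 ≤ K := (abs_nonneg _).trans k2
    rw [hdd, hd]
    refine ⟨?_, ?_, k2⟩
    · rw [scaledCutSq, abs_mul, abs_of_nonneg (by positivity)]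
      calc ((n : ℝ) + 1)⁻¹ ^ 2 * |cutSq ((n + 1) * x)|
          ≤ ((n : ℝ) + 1)⁻¹ ^ 2 * (K * ((n + 1) * x) ^ 2) := by gcongr
        _ = K * x ^ 2 := by field_simp
        _ ≤ K * 1 := mul_le_mul_of_nonneg_left (pow_le_one₀ hx.1 hx.2) hK0
        _ = K := mul_one K
    · rw [abs_mul, abs_of_nonneg (by positivity)]
      calc ((n : ℝ) + 1)⁻¹ * |deriv cutSq ((n + 1) * x)|
          ≤ ((n : ℝ) + 1)⁻¹ * (K * ((n + 1) * x)) := by gcongr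
        _ = K * x := by field_simp
        _ ≤ K * 1 := mul_le_mul_of_nonneg_left hx.2 hK0
        _ = K := mul_one K
  · obtain ⟨N, hN'⟩ := exists_nat_gt (2 / (x / 2))
    filter_upwards [eventually_ge_atTop N] with n hn
    have hx2 : 0 < x / 2 := by linarith [hx.1]
    filter_upwards [lt_mem_nhds (show x / 2 < x by linarith)] with y hy
    have h1 : 2 < N * (x / 2) := (div_lt_iff₀ hx2).mp hN'
    have h2 : (2 : ℝ) ≤ (n + 1) * y := by
      have : (N : ℝ) ≤ n := by exact_mod_cast hn
      nlinarith
    rw [scaledCutSq, cutSq_of_ge h2]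
    have := (hN n).ne'
    field_simp

/-- Smooth compactly supported approximations of `h x * (x ^ 2 * (1 - x) ^ 2)`. -/
def clampedSeq (h : ℝ → ℝ) (n : ℕ) (x : ℝ) : ℝ := h x * (scaledCutSq n x * scaledCutSq n (1 - x))

theorem interiorApprox_clampedSeq {h : ℝ → ℝ} (hh : ContDiff ℝ (⊤ : ℕ∞) h) :
    InteriorApprox (clampedSeq h) (fun x => h x * (x ^ 2 * (1 - x) ^ 2)) :=
  (interiorApprox_const hh).mul (interiorApprox_scaledCutSq.mul interiorApprox_scaledCutSq.reflect)

theorem clampedSeq_eq_zero (h : ℝ → ℝ) (n : ℕ) {x : ℝ}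
    (hx : x ∉ Set.Icc ((n : ℝ) + 1)⁻¹ (1 - ((n : ℝ) + 1)⁻¹)) : clampedSeq h n x = 0 := by
  have hN : (0 : ℝ) < n + 1 := by positivity
  have hz : ∀ y : ℝ, y ≤ ((n : ℝ) + 1)⁻¹ → scaledCutSq n y = 0 := fun y hy => by
    rw [scaledCutSq, cutSq_of_le, mul_zero]
    calc ((n : ℝ) + 1) * y ≤ (n + 1) * ((n : ℝ) + 1)⁻¹ := by gcongr
      _ = 1 := mul_inv_cancel₀ hN.ne'
  rw [Set.mem_Icc, not_and_or, not_le, not_le] at hx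
  rcases hx with hx | hx
  · rw [clampedSeq, hz x hx.le, zero_mul, mul_zero]
  · rw [clampedSeq, hz (1 - x) (by linarith), mul_zero, mul_zero]

theorem tsupport_clampedSeq_subset (h : ℝ → ℝ) (n : ℕ) :
    tsupport (clampedSeq h n) ⊆ Set.Icc ((n : ℝ) + 1)⁻¹ (1 - ((n : ℝ) + 1)⁻¹) :=
  closure_minimal (fun _ hx => by_contra fun hc => hx (clampedSeq_eq_zero h n hc)) isClosed_Icc

theorem tsupport_clampedSeq_subset_Ioo (h : ℝ → ℝ) (n : ℕ) :
    tsupport (clampedSeq h n) ⊆ Set.Ioo 0 1 := fun x hx => by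
  have h1 := tsupport_clampedSeq_subset h n hx
  have h2 : (0 : ℝ) < ((n : ℝ) + 1)⁻¹ := by positivity
  exact ⟨h2.trans_le h1.1, by linarith [h1.2]⟩

theorem hasCompactSupport_clampedSeq (h : ℝ → ℝ) (n : ℕ) : HasCompactSupport (clampedSeq h n) :=
  isCompact_Icc.of_isClosed_subset (isClosed_tsupport _) (tsupport_clampedSeq_subset h n)

theorem tendsto_integral_of_eventually_eq {F : ℕ → ℝ → ℝ} {g : ℝ → ℝ} {C : ℝ}
    (hF : ∀ n, Continuous (F n)) (hb : ∀ n, ∀ x ∈ Set.Icc (0 : ℝ) 1, |F n x| ≤ C)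
    (he : ∀ x ∈ Set.Ioo (0 : ℝ) 1, ∀ᶠ n in atTop, F n x = g x) :
    Tendsto (fun n => ∫ x in (0 : ℝ)..1, F n x) atTop (nhds (∫ x in (0 : ℝ)..1, g x)) := by
  simp only [intervalIntegral.integral_of_le zero_le_one, integral_Ioc_eq_integral_Ioo]
  refine tendsto_integral_of_dominated_convergence (fun _ => C)
    (fun n => (hF n).aestronglyMeasurable) (by simp) (fun n => ?_) ?_
  · filter_upwards [ae_restrict_mem measurableSet_Ioo] with x hx
    exact hb n x ⟨hx.1.le, hx.2.le⟩
  · filter_upwards [ae_restrict_mem measurableSet_Ioo] with x hx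
    exact tendsto_const_nhds.congr' ((he x hx).mono fun n hn => hn.symm)

/-- The finite tensor sum `∑ σ_r f_r(x) g_r(y)`. -/
def tensorSum {ι : Type*} [Fintype ι] (σ : ι → ℝ) (f g : ι → ℝ → ℝ) (p : ℝ × ℝ) : ℝ :=
  ∑ r, σ r * (f r p.1 * g r p.2)

section TensorSum

variable {ι : Type*} [Fintype ι] (σ : ι → ℝ) {f g : ι → ℝ → ℝ}

theorem hasFDerivAt_tensorSum (hf : ∀ r, Differentiable ℝ (f r)) (hg : ∀ r, Differentiable ℝ (g r))
    (p : ℝ × ℝ) : HasFDerivAt (tensorSum σ f g) (∑ r, σ r •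
      (f r p.1 • (deriv (g r) p.2 • ContinuousLinearMap.snd ℝ ℝ ℝ)
        + g r p.2 • (deriv (f r) p.1 • ContinuousLinearMap.fst ℝ ℝ ℝ))) p := by
  refine HasFDerivAt.fun_sum fun r _ => HasFDerivAt.const_mul ?_ _
  exact ((hf r p.1).hasDerivAt.comp_hasFDerivAt p hasFDerivAt_fst).mul
    ((hg r p.2).hasDerivAt.comp_hasFDerivAt p hasFDerivAt_snd)

theorem pd_fst_tensorSum (hf : ∀ r, Differentiable ℝ (f r)) (hg : ∀ r, Differentiable ℝ (g r)) :
    pd (1, 0) (tensorSum σ f g) = tensorSum σ (fun r => deriv (f r)) g := by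
  funext p
  rw [pd, (hasFDerivAt_tensorSum σ hf hg p).fderiv]
  simp [tensorSum, mul_comm]

theorem pd_snd_tensorSum (hf : ∀ r, Differentiable ℝ (f r)) (hg : ∀ r, Differentiable ℝ (g r)) :
    pd (0, 1) (tensorSum σ f g) = tensorSum σ f (fun r => deriv (g r)) := by
  funext p
  rw [pd, (hasFDerivAt_tensorSum σ hf hg p).fderiv]
  simp [tensorSum]

theorem integral_tensorSum_sq (hf : ∀ r s, Integrable fun x => f r x * f s x)
    (hg : ∀ r s, Integrable fun x => g r x * g s x) :
    ∫ p, tensorSum σ f g p ^ 2 =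
      ∑ r, ∑ s, σ r * σ s * ((∫ x, f r x * f s x) * ∫ y, g r y * g s y) := by
  have hi : ∀ r s, Integrable fun p : ℝ × ℝ =>
      σ r * σ s * ((f r p.1 * f s p.1) * (g r p.2 * g s p.2)) := fun r s =>
    ((hf r s).mul_prod (hg r s)).const_mul _
  have e : ∀ p, tensorSum σ f g p ^ 2 = ∑ r, ∑ s,
      σ r * σ s * ((f r p.1 * f s p.1) * (g r p.2 * g s p.2)) := fun p => by
    rw [pow_two, tensorSum, Finset.sum_mul_sum]
    exact Finset.sum_congr rfl fun r _ => Finset.sum_congr rfl fun s _ => by ring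
  simp only [e]
  rw [integral_finsetSum _ fun r _ => integrable_finsetSum _ fun s _ => hi r s]
  refine Finset.sum_congr rfl fun r _ => ?_
  rw [integral_finsetSum _ fun s _ => hi r s]
  refine Finset.sum_congr rfl fun s _ => ?_
  rw [integral_const_mul, Measure.volume_eq_prod, integral_prod_mul (fun x => f r x * f s x)
    (fun y => g r y * g s y)]

end TensorSum

section Trial

variable {ι : Type*} [Fintype ι] (σ : ι → ℝ) {h : ι → ℝ → ℝ}

theorem contDiff_clampedSeq {h : ℝ → ℝ} (hh : ContDiff ℝ (⊤ : ℕ∞) h) (n : ℕ) :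
    ContDiff ℝ (⊤ : ℕ∞) (clampedSeq h n) := (interiorApprox_clampedSeq hh).smooth n

theorem adm_tensorSum_clampedSeq (hh : ∀ r, ContDiff ℝ (⊤ : ℕ∞) (h r)) (n : ℕ) :
    Adm (Rect 1) (tensorSum σ (fun r => clampedSeq (h r) n) (fun r => clampedSeq (h r) n)) := by
  set K := Set.Icc ((n : ℝ) + 1)⁻¹ (1 - ((n : ℝ) + 1)⁻¹)
  have hN : (0 : ℝ) < ((n : ℝ) + 1)⁻¹ := by positivity
  have hK : tsupport (tensorSum σ (fun r => clampedSeq (h r) n) (fun r => clampedSeq (h r) n)) ⊆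
      K ×ˢ K := by
    refine closure_minimal (fun p hp => ?_) (isClosed_Icc.prod isClosed_Icc)
    by_contra hc
    refine hp (Finset.sum_eq_zero fun r _ => ?_)
    rw [Set.mem_prod, not_and_or] at hc
    rcases hc with hc | hc
    · simp only [clampedSeq_eq_zero _ _ hc, zero_mul, mul_zero]
    · simp only [clampedSeq_eq_zero _ _ hc, mul_zero]
  refine ⟨?_, (isCompact_Icc.prod isCompact_Icc).of_isClosed_subset (isClosed_tsupport _) hK,
    hK.trans ?_⟩
  · exact ContDiff.sum fun r _ => contDiff_const.mul
      (((contDiff_clampedSeq (hh r) n).comp contDiff_fst).mul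
        ((contDiff_clampedSeq (hh r) n).comp contDiff_snd))
  · have : K ⊆ Set.Ioo 0 1 := fun x hx => ⟨hN.trans_le hx.1, by linarith [hx.2]⟩
    rw [Rect, one_div, inv_one]
    exact Set.prod_mono this this

theorem tsupport_deriv_clampedSeq (h : ℝ → ℝ) (n : ℕ) :
    tsupport (deriv (clampedSeq h n)) ⊆ tsupport (clampedSeq h n) :=
  closure_minimal support_deriv_subset (isClosed_tsupport _)

theorem tsupport_deriv_deriv_clampedSeq (h : ℝ → ℝ) (n : ℕ) :
    tsupport (deriv (deriv (clampedSeq h n))) ⊆ tsupport (clampedSeq h n) :=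
  (closure_minimal support_deriv_subset (isClosed_tsupport _)).trans
    (tsupport_deriv_clampedSeq h n)

theorem integrable_mul_of_tsupport {u w : ℝ → ℝ} (hu : Continuous u) (hw : Continuous w)
    (hc : HasCompactSupport u) : Integrable fun x => u x * w x :=
  (hu.mul hw).integrable_of_hasCompactSupport hc.mul_right

theorem integral_mul_eq_interval {u : ℝ → ℝ} (w : ℝ → ℝ) (hu : tsupport u ⊆ Set.Ioo 0 1) :
    ∫ x, u x * w x = ∫ x in (0 : ℝ)..1, u x * w x := by
  refine (intervalIntegral.integral_eq_integral_of_support_subset fun x hx => ?_).symm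
  have := hu (subset_tsupport u (left_ne_zero_of_mul hx))
  exact ⟨this.1, this.2.le⟩

theorem tendsto_integral_gram {F G : ℕ → ℝ → ℝ} {f g : ℝ → ℝ} (hF : InteriorApprox F f)
    (hG : InteriorApprox G g) :
    Tendsto (fun n => ∫ x in (0 : ℝ)..1, F n x * G n x) atTop
      (nhds (∫ x in (0 : ℝ)..1, f x * g x)) ∧
    Tendsto (fun n => ∫ x in (0 : ℝ)..1, deriv (F n) x * deriv (G n) x) atTop
      (nhds (∫ x in (0 : ℝ)..1, deriv f x * deriv g x)) ∧
    Tendsto (fun n => ∫ x in (0 : ℝ)..1, deriv (deriv (F n)) x * deriv (deriv (G n)) x) atTop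
      (nhds (∫ x in (0 : ℝ)..1, deriv (deriv f) x * deriv (deriv g) x)) := by
  obtain ⟨C, hC⟩ := hF.bound
  obtain ⟨D, hD⟩ := hG.bound
  have hC0 : 0 ≤ C := (abs_nonneg _).trans (hC 0 0 (by simp)).1
  have key : ∀ {a b : ℝ}, |a| ≤ C → |b| ≤ D → |a * b| ≤ C * D := fun ha hb => by
    rw [abs_mul]; exact mul_le_mul ha hb (abs_nonneg _) hC0
  have hF' := fun n => contDiff_deriv_top (hF.smooth n)
  have hG' := fun n => contDiff_deriv_top (hG.smooth n)
  refine ⟨?_, ?_, ?_⟩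
  · refine tendsto_integral_of_eventually_eq
      (fun n => (hF.smooth n).continuous.mul (hG.smooth n).continuous)
      (fun n x hx => key (hC n x hx).1 (hD n x hx).1) fun x hx => ?_
    filter_upwards [hF.eventuallyEq x hx, hG.eventuallyEq x hx] with n h1 h2
    rw [h1.eq_of_nhds, h2.eq_of_nhds]
  · refine tendsto_integral_of_eventually_eq
      (fun n => (hF' n).continuous.mul (hG' n).continuous)
      (fun n x hx => key (hC n x hx).2.1 (hD n x hx).2.1) fun x hx => ?_
    filter_upwards [hF.eventuallyEq x hx, hG.eventuallyEq x hx] with n h1 h2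
    rw [h1.deriv_eq, h2.deriv_eq]
  · refine tendsto_integral_of_eventually_eq
      (fun n => (contDiff_deriv_top (hF' n)).continuous.mul (contDiff_deriv_top (hG' n)).continuous)
      (fun n x hx => key (hC n x hx).2.2 (hD n x hx).2.2) fun x hx => ?_
    filter_upwards [hF.eventuallyEq x hx, hG.eventuallyEq x hx] with n h1 h2
    rw [h1.deriv.deriv_eq, h2.deriv.deriv_eq]

theorem energy_nonneg {t : ℝ} (ht : 0 ≤ t) (u : ℝ × ℝ → ℝ) : 0 ≤ energy t u := by
  have h1 : 0 ≤ ∫ p, uxx u p ^ 2 := integral_nonneg fun _ => sq_nonneg _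
  have h2 : 0 ≤ ∫ p, uxy u p ^ 2 := integral_nonneg fun _ => sq_nonneg _
  have h3 : 0 ≤ ∫ p, uyy u p ^ 2 := integral_nonneg fun _ => sq_nonneg _
  unfold energy
  positivity

theorem bddBelow_quotients {t : ℝ} (ht : 0 ≤ t) :
    BddBelow {μ | ∃ v, Adm (Rect 1) v ∧ v ≠ 0 ∧ μ = energy t v / ∫ p, v p ^ 2} := by
  refine ⟨0, ?_⟩
  rintro _ ⟨v, -, -, rfl⟩
  exact div_nonneg (energy_nonneg ht v) (integral_nonneg fun _ => sq_nonneg _)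

theorem lam1_le {a : ℝ} (ha : 0 < a) {v : ℝ × ℝ → ℝ} (hv : Adm (Rect 1) v)
    (hpos : 0 < ∫ p, v p ^ 2) : lam1 a ≤ energy (a ^ 4) v / ∫ p, v p ^ 2 := by
  rw [lam1_eq ha]
  refine csInf_le (bddBelow_quotients (by positivity)) ⟨v, hv, ?_, rfl⟩
  rintro rfl
  simp at hpos

/-- A Ritz upper bound for `lam1 1`: sums of products `g_r(x) g_r(y)` of clamped functions
`g_r(x) = h_r(x) x² (1 - x)²` are valid trial functions. -/
theorem exists_adm_and_lam1_one_le (hh : ∀ r, ContDiff ℝ (⊤ : ℕ∞) (h r)) {A B M : ι → ι → ℝ}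
    (hM : ∀ r s, ∫ x in (0 : ℝ)..1, (h r x * (x ^ 2 * (1 - x) ^ 2)) *
      (h s x * (x ^ 2 * (1 - x) ^ 2)) = M r s)
    (hB : ∀ r s, ∫ x in (0 : ℝ)..1, deriv (fun x => h r x * (x ^ 2 * (1 - x) ^ 2)) x *
      deriv (fun x => h s x * (x ^ 2 * (1 - x) ^ 2)) x = B r s)
    (hA : ∀ r s, ∫ x in (0 : ℝ)..1, deriv (deriv (fun x => h r x * (x ^ 2 * (1 - x) ^ 2))) x *
      deriv (deriv (fun x => h s x * (x ^ 2 * (1 - x) ^ 2))) x = A r s)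
    (hpos : 0 < ∑ r, ∑ s, σ r * σ s * (M r s * M r s)) :
    (∃ v, Adm (Rect 1) v ∧ 0 < ∫ p, v p ^ 2) ∧
    lam1 1 ≤ (∑ r, ∑ s, σ r * σ s * (2 * (A r s * M r s) + 2 * (B r s * B r s))) /
      ∑ r, ∑ s, σ r * σ s * (M r s * M r s) := by
  set F : ℕ → ι → ℝ → ℝ := fun n r => clampedSeq (h r) n
  set v : ℕ → ℝ × ℝ → ℝ := fun n => tensorSum σ (F n) (F n)
  have hv : ∀ n, Adm (Rect 1) (v n) := adm_tensorSum_clampedSeq σ hh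
  have hs : ∀ n r, ContDiff ℝ (⊤ : ℕ∞) (F n r) := fun n r => contDiff_clampedSeq (hh r) n
  have hs' := fun n r => contDiff_deriv_top (hs n r)
  have hs'' := fun n r => contDiff_deriv_top (hs' n r)
  have hc : ∀ n r, HasCompactSupport (F n r) := fun n r => hasCompactSupport_clampedSeq (h r) n
  have d0 := fun n r => differentiable_of_top (hs n r)
  have d1 := fun n r => differentiable_of_top (hs' n r)
  have t0 : ∀ n r, tsupport (F n r) ⊆ Set.Ioo 0 1 := fun n r =>
    tsupport_clampedSeq_subset_Ioo (h r) n
  have t1 : ∀ n r, tsupport (deriv (F n r)) ⊆ Set.Ioo 0 1 := fun n r =>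
    (tsupport_deriv_clampedSeq (h r) n).trans (t0 n r)
  have t2 : ∀ n r, tsupport (deriv (deriv (F n r))) ⊆ Set.Ioo 0 1 := fun n r =>
    (tsupport_deriv_deriv_clampedSeq (h r) n).trans (t0 n r)
  have i0 := fun n r s =>
    integrable_mul_of_tsupport (hs n r).continuous (hs n s).continuous (hc n r)
  have i1 := fun n r s =>
    integrable_mul_of_tsupport (hs' n r).continuous (hs' n s).continuous (hc n r).deriv
  have i2 := fun n r s =>
    integrable_mul_of_tsupport (hs'' n r).continuous (hs'' n s).continuous (hc n r).deriv.deriv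
  have hlim := fun r s => tendsto_integral_gram (interiorApprox_clampedSeq (hh r))
    (interiorApprox_clampedSeq (hh s))
  have lM : ∀ r s, Tendsto (fun n => ∫ x, F n r x * F n s x) atTop (nhds (M r s)) := fun r s => by
    have := (hlim r s).1
    rw [hM] at this
    exact this.congr fun n => (integral_mul_eq_interval _ (t0 n r)).symm
  have lB : ∀ r s, Tendsto (fun n => ∫ x, deriv (F n r) x * deriv (F n s) x) atTop
      (nhds (B r s)) := fun r s => by
    have := (hlim r s).2.1
    rw [hB] at this
    exact this.congr fun n => (integral_mul_eq_interval _ (t1 n r)).symm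
  have lA : ∀ r s, Tendsto (fun n => ∫ x, deriv (deriv (F n r)) x * deriv (deriv (F n s)) x) atTop
      (nhds (A r s)) := fun r s => by
    have := (hlim r s).2.2
    rw [hA] at this
    exact this.congr fun n => (integral_mul_eq_interval _ (t2 n r)).symm
  have exx : ∀ n, uxx (v n) = tensorSum σ (fun r => deriv (deriv (F n r))) (F n) := fun n => by
    rw [uxx, pd_fst_tensorSum σ (d0 n) (d0 n), pd_fst_tensorSum σ (d1 n) (d0 n)]
  have exy : ∀ n, uxy (v n) = tensorSum σ (fun r => deriv (F n r)) (fun r => deriv (F n r)) :=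
    fun n => by rw [uxy, pd_fst_tensorSum σ (d0 n) (d0 n), pd_snd_tensorSum σ (d1 n) (d0 n)]
  have eyy : ∀ n, uyy (v n) = tensorSum σ (F n) (fun r => deriv (deriv (F n r))) := fun n => by
    rw [uyy, pd_snd_tensorSum σ (d0 n) (d0 n), pd_snd_tensorSum σ (d0 n) (d1 n)]
  have lD : Tendsto (fun n => ∫ p, v n p ^ 2) atTop
      (nhds (∑ r, ∑ s, σ r * σ s * (M r s * M r s))) := by
    have e : ∀ n, ∫ p, v n p ^ 2 = _ := fun n => integral_tensorSum_sq σ (i0 n) (i0 n)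
    simp only [e]
    exact tendsto_finsetSum _ fun r _ => tendsto_finsetSum _ fun s _ =>
      ((lM r s).mul (lM r s)).const_mul _
  have lE : Tendsto (fun n => energy (1 ^ 4) (v n)) atTop
      (nhds (∑ r, ∑ s, σ r * σ s * (2 * (A r s * M r s) + 2 * (B r s * B r s)))) := by
    have e : ∀ n, energy (1 ^ 4) (v n) = ∑ r, ∑ s, σ r * σ s *
        (2 * ((∫ x, deriv (deriv (F n r)) x * deriv (deriv (F n s)) x) * ∫ x, F n r x * F n s x)
        + 2 * ((∫ x, deriv (F n r) x * deriv (F n s) x) *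
          ∫ x, deriv (F n r) x * deriv (F n s) x)) := fun n => by
      rw [energy, exx, exy, eyy, integral_tensorSum_sq σ (i2 n) (i0 n),
        integral_tensorSum_sq σ (i1 n) (i1 n), integral_tensorSum_sq σ (i0 n) (i2 n)]
      simp only [one_pow, inv_one, one_mul, Finset.mul_sum, ← Finset.sum_add_distrib]
      exact Finset.sum_congr rfl fun r _ => Finset.sum_congr rfl fun s _ => by ring
    simp only [e]
    exact tendsto_finsetSum _ fun r _ => tendsto_finsetSum _ fun s _ =>
      ((((lA r s).mul (lM r s)).const_mul 2).add (((lB r s).mul (lB r s)).const_mul 2)).const_mul _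
  have hev : ∀ᶠ n in atTop, 0 < ∫ p, v n p ^ 2 := lD.eventually (lt_mem_nhds hpos)
  refine ⟨?_, ?_⟩
  · obtain ⟨n, hn⟩ := hev.exists
    exact ⟨v n, hv n, hn⟩
  · refine ge_of_tendsto (lE.div lD hpos.ne') ?_
    filter_upwards [hev] with n hn
    exact lam1_le one_pos (hv n) hn

end Trial

theorem integral_two_mul_sub_one_pow (m : ℕ) :
    ∫ x in (0 : ℝ)..1, (2 * x - 1) ^ m = (1 - (-1) ^ (m + 1)) / (2 * (m + 1)) := by
  rw [intervalIntegral.integral_comp_mul_sub (fun x => x ^ m) two_ne_zero, integral_pow]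
  norm_num
  field_simp

theorem hasDerivAt_const_mul_centred_pow (c : ℝ) (m : ℕ) (x : ℝ) :
    HasDerivAt (fun x : ℝ => c * (2 * x - 1) ^ m) (c * (2 * m) * (2 * x - 1) ^ (m - 1)) x := by
  have h := (((((hasDerivAt_id x).const_mul 2).sub_const 1).pow m).const_mul c)
  refine h.congr_deriv ?_
  simp
  ring

/-- The even polynomial `∑ a_k (2 * x - 1)^(2k)` of degree at most `12`. -/
def centredPoly (a : Fin 7 → ℝ) (x : ℝ) : ℝ := ∑ k : Fin 7, a k * (2 * x - 1) ^ (2 * k : ℕ)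

theorem deriv_centredPoly (a : Fin 7 → ℝ) : deriv (centredPoly a) =
    fun x => ∑ k : Fin 7, a k * (2 * (2 * k : ℕ)) * (2 * x - 1) ^ (2 * k - 1 : ℕ) := by
  funext x
  exact (HasDerivAt.fun_sum fun k _ => hasDerivAt_const_mul_centred_pow (a k) (2 * k) x).deriv

theorem deriv_deriv_centredPoly (a : Fin 7 → ℝ) : deriv (deriv (centredPoly a)) =
    fun x => ∑ k : Fin 7, a k * (2 * (2 * k : ℕ)) * (2 * (2 * k - 1 : ℕ)) *
      (2 * x - 1) ^ (2 * k - 1 - 1 : ℕ) := by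
  rw [deriv_centredPoly]
  funext x
  exact (HasDerivAt.fun_sum fun (k : Fin 7) _ =>
    hasDerivAt_const_mul_centred_pow (a k * (2 * (2 * k : ℕ))) (2 * k - 1) x).deriv

theorem integral_sum_mul_sum_centred {ι : Type*} [Fintype ι] (b c : ι → ℝ) (e : ι → ℕ) :
    ∫ x in (0 : ℝ)..1, (∑ k, b k * (2 * x - 1) ^ e k) * ∑ l, c l * (2 * x - 1) ^ e l =
      ∑ k, ∑ l, b k * c l * ((1 - (-1) ^ (e k + e l + 1)) / (2 * ((e k + e l : ℕ) + 1))) := by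
  have h : ∀ x : ℝ, (∑ k, b k * (2 * x - 1) ^ e k) * ∑ l, c l * (2 * x - 1) ^ e l =
      ∑ k, ∑ l, b k * c l * (2 * x - 1) ^ (e k + e l) := fun x => by
    rw [Finset.sum_mul_sum]
    exact Finset.sum_congr rfl fun k _ => Finset.sum_congr rfl fun l _ => by rw [pow_add]; ring
  have hi : ∀ k l, IntervalIntegrable (fun x : ℝ => b k * c l * (2 * x - 1) ^ (e k + e l))
      volume 0 1 := fun k l => Continuous.intervalIntegrable (by fun_prop) _ _
  simp only [h]
  rw [intervalIntegral.integral_finsetSum fun k _ =>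
    Continuous.intervalIntegrable (by fun_prop) _ _]
  refine Finset.sum_congr rfl fun k _ => ?_
  rw [intervalIntegral.integral_finsetSum fun l _ => hi k l]
  refine Finset.sum_congr rfl fun l _ => ?_
  rw [intervalIntegral.integral_const_mul, integral_two_mul_sub_one_pow]

/-- Coefficients of the Ritz trial functions divided by `(1 - s²)²`, in powers of `s²`. -/
def ritzFactor : Fin 4 → Fin 5 → ℝ :=
  ![![1000, -17, 26, 1, 1], ![5, -42, -47, -25, -10], ![1, -19, 21, -7, 103],
    ![1, -16, -150, 970, -1120]]

/-- Coefficients of the Ritz trial functions in powers of `s²`, where `s = 2 * x - 1`. -/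
def ritzCoeff : Fin 4 → Fin 7 → ℝ :=
  ![![1000, -2017, 1060, -68, 25, -1, 1], ![5, -52, 42, 27, -7, -5, -10],
    ![1, -21, 60, -68, 138, -213, 103], ![1, -18, -117, 1254, -3210, 3210, -1120]]

/-- Weights of the Ritz trial function. -/
def ritzWeight : Fin 4 → ℝ := ![1, -64, -100, -5]

theorem ritzFactor_mul (r : Fin 4) :
    (fun x => 16 * (∑ i : Fin 5, ritzFactor r i * (2 * x - 1) ^ (2 * i : ℕ)) *
      (x ^ 2 * (1 - x) ^ 2)) = centredPoly (ritzCoeff r) := by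
  funext x
  fin_cases r <;> simp [centredPoly, ritzFactor, ritzCoeff, Fin.sum_univ_succ] <;> ring

/-- Gram matrix of the Ritz trial functions. -/
def ritzMass : Fin 4 → Fin 4 → ℝ :=
  ![![96936702812288/239028075, -7829632/5870865, -2872975488/185910725, -1161814912/66927861],
    ![-7829632/5870865, 7837935488/334639305, 45382528/334639305, 21382016/47805615],
    ![-2872975488/185910725, 45382528/334639305, 175642496/185910725, -3627136/111546435],
    ![-1161814912/66927861, 21382016/47805615, -3627136/111546435, 36508288/22309287]]


theorem integral_centredPoly_mul (a b : Fin 7 → ℝ) :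
    ∫ x in (0 : ℝ)..1, centredPoly a x * centredPoly b x =
      ∑ k : Fin 7, ∑ l : Fin 7, a k * b l * (1 / (2 * k + 2 * l + 1 : ℕ)) := by
  simp only [centredPoly]
  rw [integral_sum_mul_sum_centred]
  refine Finset.sum_congr rfl fun k _ => Finset.sum_congr rfl fun l _ => ?_
  rw [Odd.neg_one_pow ⟨(k : ℕ) + l, by ring⟩]
  push_cast
  rw [show (1 - -1 : ℝ) = 2 by norm_num, mul_comm 2 ((2 * (k : ℝ) + _) + 1), ← div_div]
  field_simp

theorem integral_deriv_centredPoly_mul (a b : Fin 7 → ℝ) :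
    ∫ x in (0 : ℝ)..1, deriv (centredPoly a) x * deriv (centredPoly b) x =
      ∑ k : Fin 7, ∑ l : Fin 7,
        a k * b l * ((16 * k * l : ℕ) / (2 * k + 2 * l - 1 : ℕ)) := by
  simp only [deriv_centredPoly]
  rw [integral_sum_mul_sum_centred]
  refine Finset.sum_congr rfl fun k _ => Finset.sum_congr rfl fun l _ => ?_
  obtain hk | ⟨m, hm⟩ : (k : ℕ) = 0 ∨ ∃ m, (k : ℕ) = m + 1 :=
    Nat.eq_zero_or_eq_succ_pred k |>.imp_right fun h => ⟨_, h⟩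
  · simp [hk]
  obtain hl | ⟨n, hn⟩ : (l : ℕ) = 0 ∨ ∃ m, (l : ℕ) = m + 1 :=
    Nat.eq_zero_or_eq_succ_pred l |>.imp_right fun h => ⟨_, h⟩
  · simp [hl]
  rw [hm, hn, show 2 * (m + 1) - 1 + (2 * (n + 1) - 1) = 2 * (m + n + 1) by lia,
    show 2 * (m + 1) + 2 * (n + 1) - 1 = 2 * (m + n + 1) + 1 by lia,
    Odd.neg_one_pow ⟨m + n + 1, rfl⟩]
  push_cast
  field_simp
  ring

theorem integral_deriv_deriv_centredPoly_mul (a b : Fin 7 → ℝ) :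
    ∫ x in (0 : ℝ)..1, deriv (deriv (centredPoly a)) x * deriv (deriv (centredPoly b)) x =
      ∑ k : Fin 7, ∑ l : Fin 7, a k * b l *
        ((64 * k * l * (2 * k - 1) * (2 * l - 1) : ℕ) / (2 * k + 2 * l - 3 : ℕ)) := by
  simp only [deriv_deriv_centredPoly]
  rw [integral_sum_mul_sum_centred]
  refine Finset.sum_congr rfl fun k _ => Finset.sum_congr rfl fun l _ => ?_
  obtain hk | ⟨m, hm⟩ : (k : ℕ) = 0 ∨ ∃ m, (k : ℕ) = m + 1 :=
    Nat.eq_zero_or_eq_succ_pred k |>.imp_right fun h => ⟨_, h⟩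
  · simp [hk]
  obtain hl | ⟨n, hn⟩ : (l : ℕ) = 0 ∨ ∃ m, (l : ℕ) = m + 1 :=
    Nat.eq_zero_or_eq_succ_pred l |>.imp_right fun h => ⟨_, h⟩
  · simp [hl]
  rw [hm, hn, show 2 * (m + 1) - 1 - 1 + (2 * (n + 1) - 1 - 1) = 2 * (m + n) by lia,
    show 2 * (m + 1) + 2 * (n + 1) - 3 = 2 * (m + n) + 1 by lia,
    show 2 * (m + 1) - 1 = 2 * m + 1 by lia, show 2 * (n + 1) - 1 = 2 * n + 1 by lia,
    Odd.neg_one_pow ⟨m + n, rfl⟩]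
  push_cast
  field_simp
  ring

theorem integral_mass (r s : Fin 4) :
    ∫ x in (0 : ℝ)..1, centredPoly (ritzCoeff r) x * centredPoly (ritzCoeff s) x =
      ritzMass r s := by
  rw [integral_centredPoly_mul]
  simp only [Fin.sum_univ_seven]
  fin_cases r <;> fin_cases s <;> simp [ritzMass, ritzCoeff] <;> norm_num

/-- Gram matrix of the first derivatives of the Ritz trial functions. -/
def ritzGrad : Fin 4 → Fin 4 → ℝ :=
  ![![325816804356608/66927861, 37247409152/1062347, -41029539328/7436429, 7753691648/1312311],
    ![37247409152/1062347, 56595336704/25741485, -1395995648/37182145, -23000286208/111546435],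
    ![-41029539328/7436429, -1395995648/37182145, 10613586432/37182145, -1132265984/7436429],
    ![7753691648/1312311, -23000286208/111546435, -1132265984/7436429, 42684258816/37182145]]

/-- Gram matrix of the second derivatives of the Ritz trial functions. -/
def ritzBend : Fin 4 → Fin 4 → ℝ :=
  ![![198204526375936/969969, -798891920384/969969, 38309567488/323323, -7182361600/46189],
    ![-798891920384/969969, 1016355396608/1616615, -3953609728/17017, 510004319232/1616615],
    ![38309567488/323323, -3953609728/17017, 6404205568/24871, -175216647168/323323],
    ![-7182361600/46189, 510004319232/1616615, -175216647168/323323, 3417977269248/1616615]]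

theorem integral_grad (r s : Fin 4) :
    ∫ x in (0 : ℝ)..1, deriv (centredPoly (ritzCoeff r)) x * deriv (centredPoly (ritzCoeff s)) x =
      ritzGrad r s := by
  rw [integral_deriv_centredPoly_mul]
  simp only [Fin.sum_univ_seven]
  fin_cases r <;> fin_cases s <;> simp [ritzGrad, ritzCoeff] <;> norm_num

theorem integral_bend (r s : Fin 4) :
    ∫ x in (0 : ℝ)..1, deriv (deriv (centredPoly (ritzCoeff r))) x *
      deriv (deriv (centredPoly (ritzCoeff s))) x = ritzBend r s := by
  rw [integral_deriv_deriv_centredPoly_mul]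
  simp only [Fin.sum_univ_seven]
  fin_cases r <;> fin_cases s <;> simp [ritzBend, ritzCoeff] <;> norm_num

theorem ritz_mass_pos :
    0 < ∑ r, ∑ s, ritzWeight r * ritzWeight s * (ritzMass r s * ritzMass r s) := by
  simp [Fin.sum_univ_four, ritzWeight, ritzMass]
  norm_num

theorem ritz_quotient_lt : (∑ r, ∑ s, ritzWeight r * ritzWeight s *
      (2 * (ritzBend r s * ritzMass r s) + 2 * (ritzGrad r s * ritzGrad r s))) /
    ∑ r, ∑ s, ritzWeight r * ritzWeight s * (ritzMass r s * ritzMass r s) < 1294.9346 := by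
  rw [div_lt_iff₀ ritz_mass_pos]
  simp [Fin.sum_univ_four, ritzWeight, ritzMass, ritzGrad, ritzBend]
  norm_num

theorem exists_adm_and_lam1_one_lt :
    (∃ v, Adm (Rect 1) v ∧ 0 < ∫ p, v p ^ 2) ∧ lam1 1 < 1294.9346 := by
  have h := exists_adm_and_lam1_one_le ritzWeight (A := ritzBend) (B := ritzGrad) (M := ritzMass)
    (h := fun r x => 16 * (∑ i : Fin 5, ritzFactor r i * (2 * x - 1) ^ (2 * i : ℕ)))
    (fun r => by fun_prop)
    (fun r s => by
      have := integral_mass r s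
      rwa [← ritzFactor_mul, ← ritzFactor_mul] at this)
    (fun r s => by
      simp only [ritzFactor_mul]
      exact integral_grad r s)
    (fun r s => by
      simp only [ritzFactor_mul]
      exact integral_bend r s) ritz_mass_pos
  exact ⟨h.1, h.2.trans_lt ritz_quotient_lt⟩

theorem Adm.integral_sq_pos {Ω : Set (ℝ × ℝ)} {v : ℝ × ℝ → ℝ} (h : Adm Ω v) (hv : v ≠ 0) :
    0 < ∫ p, v p ^ 2 := by
  obtain ⟨x, hx⟩ := Function.ne_iff.mp hv
  refine (h.continuous.pow 2).integral_pos_of_hasCompactSupport_nonneg_nonzero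
    (x := x) ?_ (fun p => sq_nonneg (v p)) (pow_ne_zero 2 hx)
  exact h.2.1.comp_left (g := fun y => y ^ 2) (by norm_num)

theorem quotients_nonempty (t : ℝ) :
    {μ | ∃ v, Adm (Rect 1) v ∧ v ≠ 0 ∧ μ = energy t v / ∫ p, v p ^ 2}.Nonempty := by
  obtain ⟨v, hv, hpos⟩ := exists_adm_and_lam1_one_lt.1
  refine ⟨_, v, hv, ?_, rfl⟩
  rintro rfl
  simp at hpos

theorem le_lam1 {a c : ℝ} (ha : 0 < a)
    (h : ∀ v, Adm (Rect 1) v → v ≠ 0 → c ≤ energy (a ^ 4) v / ∫ p, v p ^ 2) : c ≤ lam1 a := by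
  rw [lam1_eq ha]
  refine le_csInf (quotients_nonempty _) ?_
  rintro _ ⟨v, hv, hv0, rfl⟩
  exact h v hv hv0

theorem mul_energy_le {s t ρ : ℝ} (hs : 0 < s) (ht : 0 < t) (h1 : ρ ≤ 1) (h2 : ρ * t ≤ s)
    (h3 : ρ * s ≤ t) (v : ℝ × ℝ → ℝ) : ρ * energy t v ≤ energy s v := by
  have hA : 0 ≤ ∫ p, uxx v p ^ 2 := integral_nonneg fun _ => sq_nonneg _
  have hB : 0 ≤ ∫ p, uxy v p ^ 2 := integral_nonneg fun _ => sq_nonneg _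
  have hC : 0 ≤ ∫ p, uyy v p ^ 2 := integral_nonneg fun _ => sq_nonneg _
  have h3' : ρ * t⁻¹ ≤ s⁻¹ := by
    rw [← div_eq_mul_inv, ← one_div, div_le_div_iff₀ ht hs, one_mul]
    exact h3
  unfold energy
  linarith [mul_le_mul_of_nonneg_right h3' hA, mul_le_mul_of_nonneg_right h1 hB,
    mul_le_mul_of_nonneg_right h2 hC]

theorem mul_lam1_le {a b ρ : ℝ} (ha : 0 < a) (hb : 0 < b) (h0 : 0 ≤ ρ) (h1 : ρ ≤ 1)
    (h2 : ρ * b ^ 4 ≤ a ^ 4) (h3 : ρ * a ^ 4 ≤ b ^ 4) : ρ * lam1 b ≤ lam1 a := by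
  refine le_lam1 ha fun v hv hv0 => ?_
  have hpos := hv.integral_sq_pos hv0
  rw [le_div_iff₀ hpos]
  calc ρ * lam1 b * (∫ p, v p ^ 2)
      ≤ ρ * (energy (b ^ 4) v / ∫ p, v p ^ 2) * (∫ p, v p ^ 2) := by
        gcongr
        exact lam1_le hb hv hpos
    _ = ρ * energy (b ^ 4) v := by field_simp
    _ ≤ energy (a ^ 4) v := mul_energy_le (by positivity) (by positivity) h1 h2 h3 v

theorem lowerSemicontinuousOn_lam1 : LowerSemicontinuousOn lam1 (Set.Ioi 0) := by
  intro b hb y hy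
  rw [Set.mem_Ioi] at hb
  have hb4 : b ^ 4 ≠ 0 := by positivity
  have hc : ContinuousAt (fun a : ℝ => min (a ^ 4 / b ^ 4) (b ^ 4 / a ^ 4) * lam1 b) b := by
    have h1 : ContinuousAt (fun a : ℝ => a ^ 4 / b ^ 4) b := (continuousAt_id.pow 4).div_const _
    have h2 : ContinuousAt (fun a : ℝ => b ^ 4 / a ^ 4) b :=
      continuousAt_const.div (continuousAt_id.pow 4) hb4
    exact (Tendsto.min h1 h2).mul tendsto_const_nhds
  have hlim : ∀ᶠ a in nhds b, y < min (a ^ 4 / b ^ 4) (b ^ 4 / a ^ 4) * lam1 b :=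
    hc.eventually (lt_mem_nhds (by simpa [div_self hb4] using hy))
  filter_upwards [nhdsWithin_le_nhds hlim, self_mem_nhdsWithin] with a ha ha0
  rw [Set.mem_Ioi] at ha0
  have ha4 : 0 < a ^ 4 := by positivity
  have hb4' : 0 < b ^ 4 := by positivity
  refine ha.trans_le (mul_lam1_le ha0 hb (by positivity) ?_ ?_ ?_)
  · rcases le_total (a ^ 4) (b ^ 4) with h | h
    · exact (min_le_left _ _).trans ((div_le_one hb4').mpr h)
    · exact (min_le_right _ _).trans ((div_le_one ha4).mpr h)
  · exact (le_div_iff₀ hb4').mp (min_le_left _ _)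
  · exact (le_div_iff₀ ha4).mp (min_le_right _ _)

theorem lam1_one_lt_of_ge {a : ℝ} (ha : 1.032695 ≤ a) : lam1 1 < lam1 a := by
  have ha0 : 0 < a := lt_of_lt_of_le (by norm_num) ha
  refine exists_adm_and_lam1_one_lt.2.trans_le (le_lam1 ha0 fun v hv hv0 => ?_)
  rw [le_div_iff₀ (hv.integral_sq_pos hv0)]
  exact hv.lower_bound_energy (by gcongr)

/-- There exists a global minimiser `a* ∈ [1, 1.032695)` of the first Dirichlet
biharmonic eigenvalue over rectangles of unit area, and every minimiser has
side-length quotient `(a*)² ≤ 1.066459`. -/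
theorem first_eigenvalue_minimiser_exists_and_close_to_square :
    (∃ astar : ℝ, astar ∈ Set.Ico (1 : ℝ) 1.032695 ∧
      ∀ a : ℝ, 1 ≤ a → lam1 astar ≤ lam1 a) ∧
    (∀ astar : ℝ, 1 ≤ astar → (∀ a : ℝ, 1 ≤ a → lam1 astar ≤ lam1 a) →
      astar ^ 2 ≤ 1.066459) := by
  have hlt : ∀ b, lam1 b ≤ lam1 1 → b < 1.032695 := fun b hb =>
    not_le.mp fun h => (lam1_one_lt_of_ge h).not_ge hb
  refine ⟨?_, fun b hb hmin => ?_⟩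
  · have hmem : (1 : ℝ) ∈ Set.Icc (1 : ℝ) 1.032695 := ⟨le_rfl, by norm_num⟩
    obtain ⟨b, hb, hbmin⟩ := (lowerSemicontinuousOn_lam1.mono fun x hx =>
      zero_lt_one.trans_le hx.1).exists_isMinOn ⟨1, hmem⟩ isCompact_Icc
    have hb1 : lam1 b ≤ lam1 1 := hbmin hmem
    refine ⟨b, ⟨hb.1, hlt b hb1⟩, fun a ha => ?_⟩
    rcases le_total a 1.032695 with h | h
    · exact hbmin ⟨ha, h⟩
    · exact hb1.trans (lam1_one_lt_of_ge h).le
  · have := hlt b (hmin 1 le_rfl)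
    nlinarith
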